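/- arXiv:2504.17909 — 4 statements merged into one kernel-verified Lean document; each statement's English description precedes it below -/
import Mathlib

section
/- Let D be a reduced effective divisor on P¹ over F_q, k ≥ 0 an integer, 𝒟 ⊆ F_k a D-marking, ℓ ≥ 0 an integer, and L = O(3,ℓ) on F_k. Consider the restriction map α: H⁰(F_k, L) → H⁰(𝒟, O_𝒟). If ℓ − 2k ≥ (deg D + k)/2, then at least one of the following holds: α is surjective, or every section s ∈ ker(α) is horizontally reducible. -/
/-!
Statement 12.  The surjectivity/fixed-component dichotomy for the restriction map
`α : H⁰(F_k, O(3,ℓ)) → H⁰(𝒟, O_𝒟)` attached to a `D`-marking `𝒟` of the Hirzebruch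
surface `F_k` over `F_q`, in the range `ℓ − 2k ≥ (deg D + k)/2`.

A `D`-marking is the choice, for each closed point `P ∈ D`, of a relative degree
one point of the fiber over `P`: either `(z : 1)` with `z` in the residue field of
`P`, or `(1 : 0)`; it is encoded as a function assigning to each `P` an element of
`Option (Res P)`.  The space `H⁰(𝒟, O_𝒟)` is `∏_{P ∈ D} κ(P)`, and `α` evaluates a
section at each marked point (in a fixed trivialization).
-/
open scoped Classical

noncomputable section

namespace Stmt12

/-- Closed points of the projective line `P¹` over `F_q`: `none` is the point at
infinity, and `some p` corresponds to the monic irreducible polynomial `p`. -/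
abbrev P1Pt (Fq : Type) [Field Fq] : Type :=
  Option {p : Polynomial Fq // p.Monic ∧ Irreducible p}

variable {Fq : Type} [Field Fq]

/-- The degree of a closed point of `P¹`. -/
def P1Pt.deg : P1Pt Fq → ℕ
  | none => 1
  | some p => p.1.natDegree

/-- The residue field of a closed point of `P¹`. -/
def P1Pt.Res : P1Pt Fq → Type
  | none => Fq
  | some p => AdjoinRoot p.1

instance (P : P1Pt Fq) : CommRing (P1Pt.Res P) :=
  match P with
  | none => inferInstanceAs (CommRing Fq)
  | some p => inferInstanceAs (CommRing (AdjoinRoot p.1))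

instance (P : P1Pt Fq) : Algebra Fq (P1Pt.Res P) :=
  match P with
  | none => Algebra.id Fq
  | some p => inferInstanceAs (Algebra Fq (AdjoinRoot p.1))

/-- The homogeneous coordinates `(t₀ : t₁)` of a closed point of `P¹`, in its residue
field: `(1 : 0)` for the point at infinity, and `(θ : 1)` with `θ` the root of `p`
for the point `some p`. -/
def P1Pt.coords : (P : P1Pt Fq) → Fin 2 → P1Pt.Res P
  | none => ![1, 0]
  | some p => ![AdjoinRoot.root p.1, 1]

/-- Evaluate a polynomial in the homogeneous coordinates `t₀, t₁` of the base `P¹`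
at a closed point `P`, in the residue field of `P`. -/
def resEval (P : P1Pt Fq) (A : MvPolynomial (Fin 2) Fq) : P1Pt.Res P :=
  MvPolynomial.aeval (P1Pt.coords P) A

/-- `r_P(s)`: the number of relative degree one points of the fiber of `F_k → P¹`
over `P` at which the binary cubic form `s = (A₀, A₁, A₂, A₃)` vanishes.  These
points are the `(z : 1)` with `z` in the residue field of `P`, together with `(1 : 0)`. -/
def rP (P : P1Pt Fq) (s : Fin 4 → MvPolynomial (Fin 2) Fq) : ℕ :=
  Nat.card {z : P1Pt.Res P //
      resEval P (s 0) * z ^ 3 + resEval P (s 1) * z ^ 2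
        + resEval P (s 2) * z + resEval P (s 3) = 0} +
    (if resEval P (s 0) = 0 then 1 else 0)

/-- The degree of a reduced effective divisor (a finite set of closed points) on `P¹`. -/
def degD (D : Finset (P1Pt Fq)) : ℕ := ∑ P ∈ D, P1Pt.deg P

/-- `r_D(s) = ∏_{P ∣ D} r_P(s)`. -/
def rD (D : Finset (P1Pt Fq)) (s : Fin 4 → MvPolynomial (Fin 2) Fq) : ℕ :=
  ∏ P ∈ D, rP P s

/-- `a_D(s) = ∏_{P ∣ D} (r_P(s) − 1)`. -/
def aD (D : Finset (P1Pt Fq)) (s : Fin 4 → MvPolynomial (Fin 2) Fq) : ℤ :=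
  ∏ P ∈ D, ((rP P s : ℤ) - 1)

/-- `p` is homogeneous of (possibly negative) degree `d`; for `d < 0` this forces
`p = 0`. -/
def IsHomOfDeg (p : MvPolynomial (Fin 2) Fq) (d : ℤ) : Prop :=
  p.IsHomogeneous d.toNat ∧ (d < 0 → p = 0)

/-- The space of global sections of `O(m, ℓ)` on the Hirzebruch surface `F_k`,
viewed as tuples `(A₀, …, A_m)` of binary forms with `A_i` homogeneous of degree
`ℓ − i·k`. -/
def SecSet (m ℓ k : ℕ) : Set (Fin (m + 1) → MvPolynomial (Fin 2) Fq) :=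
  {s | ∀ i : Fin (m + 1), IsHomOfDeg (s i) ((ℓ : ℤ) - (i : ℕ) * k)}

/-- A binary cubic form `s ∈ H⁰(F_k, O(3,ℓ))` is horizontally reducible iff it is
zero or factors as a product of a nonzero quadratic and a nonzero linear form in
`x, y` with homogeneous polynomial coefficients. -/
def HorizRed (k : ℕ) (s : Fin 4 → MvPolynomial (Fin 2) Fq) : Prop :=
  s = 0 ∨ ∃ (b c : ℤ) (B : Fin 3 → MvPolynomial (Fin 2) Fq)
      (C : Fin 2 → MvPolynomial (Fin 2) Fq),
    B ≠ 0 ∧ C ≠ 0 ∧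
    (∀ j : Fin 3, IsHomOfDeg (B j) (b - (j : ℕ) * k)) ∧
    (∀ j : Fin 2, IsHomOfDeg (C j) (c - (j : ℕ) * k)) ∧
    s 0 = B 0 * C 0 ∧ s 1 = B 0 * C 1 + B 1 * C 0 ∧
    s 2 = B 1 * C 1 + B 2 * C 0 ∧ s 3 = B 2 * C 1

/-- The value (in a fixed trivialization) of a binary cubic section
`s = (A₀, A₁, A₂, A₃)` of `O(3, ℓ)` at the point of the fiber over `P` marked by
`pt`: at `(z : 1)` it is `A₀z³ + A₁z² + A₂z + A₃` (coefficients evaluated at `P`),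
and at `(1 : 0)` it is `A₀(P)`. -/
def evalAt3 (P : P1Pt Fq) (pt : Option (P1Pt.Res P))
    (s : Fin 4 → MvPolynomial (Fin 2) Fq) : P1Pt.Res P :=
  match pt with
  | some z =>
      resEval P (s 0) * z ^ 3 + resEval P (s 1) * z ^ 2 +
        resEval P (s 2) * z + resEval P (s 3)
  | none => resEval P (s 0)


open Polynomial

/-- forms of degree `d` (dehomogenized). -/
def Fm (Fq : Type) [Field Fq] (d : ℤ) : Submodule Fq Fq[X] := Polynomial.degreeLT Fq (d + 1).toNat

theorem mem_Fm {d : ℤ} {p : Fq[X]} : p ∈ Fm Fq d ↔ ∀ n : ℕ, d < n → p.coeff n = 0 := by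
  unfold Fm
  rw [Polynomial.mem_degreeLT, Polynomial.degree_lt_iff_coeff_zero]
  constructor
  · intro h n hn
    exact h n (by omega)
  · intro h n hn
    exact h n (by omega)

theorem Fm_neg {d : ℤ} (hd : d < 0) {p : Fq[X]} (hp : p ∈ Fm Fq d) : p = 0 := by
  ext n
  simpa using mem_Fm.1 hp n (by omega)

theorem Fm_iff {d : ℤ} (hd : 0 ≤ d) {p : Fq[X]} : p ∈ Fm Fq d ↔ p.natDegree ≤ d.toNat := by
  rw [mem_Fm, Polynomial.natDegree_le_iff_coeff_eq_zero]
  constructor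
  · intro h n hn
    exact h n (by omega)
  · intro h n hn
    exact h n (by omega)

theorem Fm_mono {a b : ℤ} (h : a ≤ b) {p : Fq[X]} (hp : p ∈ Fm Fq a) : p ∈ Fm Fq b :=
  mem_Fm.2 fun n hn => mem_Fm.1 hp n (by omega)

theorem Fm_mul {a b : ℤ} {p q : Fq[X]} (hp : p ∈ Fm Fq a) (hq : q ∈ Fm Fq b) :
    p * q ∈ Fm Fq (a + b) := by
  rw [mem_Fm] at *
  intro n hn
  rw [Polynomial.coeff_mul]
  refine Finset.sum_eq_zero fun x hx => ?_
  have hx := Finset.HasAntidiagonal.mem_antidiagonal.1 hx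
  by_cases h : a < x.1
  · rw [hp _ h, zero_mul]
  · rw [hq _ (by omega), mul_zero]

theorem coeff_mul_top {a b : ℤ} {p q : Fq[X]} (hp : p ∈ Fm Fq a) (hq : q ∈ Fm Fq b) :
    (p * q).coeff (a + b).toNat = p.coeff a.toNat * q.coeff b.toNat := by
  by_cases ha : a < 0
  · simp [Fm_neg ha hp]
  by_cases hb : b < 0
  · simp [Fm_neg hb hq]
  push Not at ha hb
  rw [show (a + b).toNat = a.toNat + b.toNat by omega]
  exact Polynomial.coeff_mul_add_eq_of_natDegree_le ((Fm_iff ha).1 hp) ((Fm_iff hb).1 hq)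

/-- value of a form at a point. -/
def ev (d : ℤ) : (P : P1Pt Fq) → Fq[X] →ₗ[Fq] P1Pt.Res P
  | none => (Polynomial.lcoeff Fq d.toNat : Fq[X] →ₗ[Fq] Fq)
  | some q => ((AdjoinRoot.mkₐ q.1).toLinearMap : Fq[X] →ₗ[Fq] AdjoinRoot q.1)

theorem ev_none (d : ℤ) (p : Fq[X]) : ev d (none : P1Pt Fq) p = (p.coeff d.toNat : Fq) := rfl
theorem ev_some (d : ℤ) (q) (p : Fq[X]) : ev d (some q : P1Pt Fq) p = AdjoinRoot.mk q.1 p := rfl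

theorem ev_mul {a b : ℤ} (P : P1Pt Fq) {p q : Fq[X]} (hp : p ∈ Fm Fq a) (hq : q ∈ Fm Fq b) :
    ev (a + b) P (p * q) = ev a P p * ev b P q := by
  rcases P with _ | r
  · have h := coeff_mul_top hp hq
    exact h
  · exact map_mul (AdjoinRoot.mk r.1) p q

theorem res_unit {P : P1Pt Fq} {x : P1Pt.Res P} (hx : x ≠ 0) : ∃ y, y * x = 1 := by
  rcases P with _ | r
  · have h : ∀ z : Fq, z ≠ 0 → ∃ y, y * z = 1 := fun z hz => ⟨z⁻¹, inv_mul_cancel₀ hz⟩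
    exact h x hx
  · have : Fact (Irreducible r.1) := ⟨r.2.2⟩
    have h : ∀ z : AdjoinRoot r.1, z ≠ 0 → ∃ y, y * z = 1 := fun z hz => ⟨z⁻¹, inv_mul_cancel₀ hz⟩
    exact h x hx

theorem res_nontrivial (P : P1Pt Fq) : (1 : P1Pt.Res P) ≠ 0 := by
  rcases P with _ | r
  · exact one_ne_zero (α := Fq)
  · have : Fact (Irreducible r.1) := ⟨r.2.2⟩
    exact one_ne_zero (α := AdjoinRoot r.1)

theorem res_mul {P : P1Pt Fq} {x y : P1Pt.Res P} (h : x * y = 0) : x = 0 ∨ y = 0 := by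
  by_contra hc
  push Not at hc
  obtain ⟨x', hx'⟩ := res_unit hc.1
  apply hc.2
  calc y = (x' * x) * y := by rw [hx', one_mul]
    _ = x' * (x * y) := by ring
    _ = 0 := by rw [h, mul_zero]

/-- equation of the point. -/
def hP : P1Pt Fq → Fq[X]
  | none => 1
  | some q => q.1

theorem deg_pos (P : P1Pt Fq) : 0 < P.deg := by
  rcases P with _ | r
  · exact one_pos
  · exact r.2.2.natDegree_pos

theorem hP_mem (P : P1Pt Fq) : hP P ∈ Fm Fq P.deg := by
  rcases P with _ | r
  · rw [Fm_iff (by omega)]; simp [hP]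
  · rw [Fm_iff (by omega)]; simp [hP, P1Pt.deg]

theorem hP_ev_self (P : P1Pt Fq) : ev P.deg P (hP P) = 0 := by
  rcases P with _ | r
  · rw [ev_none]; simp [hP, P1Pt.deg, Polynomial.coeff_one]; rfl
  · exact AdjoinRoot.mk_self

theorem hP_ev_ne {P P' : P1Pt Fq} (h : P' ≠ P) : ev P.deg P' (hP P) ≠ 0 := by
  rcases P with _ | r
  · rcases P' with _ | r'
    · exact absurd rfl h
    · have : ev (P1Pt.deg (none : P1Pt Fq)) (some r') (hP none) = 1 := map_one (AdjoinRoot.mk r'.1)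
      rw [this]; exact res_nontrivial _
  · rcases P' with _ | r'
    · rw [ev_none]
      have : (hP (some r)).coeff ((P1Pt.deg (some r) : ℕ) : ℤ).toNat = 1 := by
        simpa [hP, P1Pt.deg] using r.2.1.leadingCoeff
      rw [this]; exact one_ne_zero (α := Fq)
    · intro h0
      rw [ev_some] at h0
      have h1 : r'.1 ∣ r.1 := AdjoinRoot.mk_eq_zero.1 h0
      have h2 := (r'.2.2.associated_of_dvd r.2.2 h1)
      have h3 := Polynomial.eq_of_monic_of_associated r'.2.1 r.2.1 h2
      exact h (congrArg some (Subtype.ext h3))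

theorem hP_div {d : ℤ} (P : P1Pt Fq) {p : Fq[X]} (hp : p ∈ Fm Fq d) (h : ev d P p = 0) :
    ∃ p' ∈ Fm Fq (d - P.deg), p = hP P * p' := by
  rcases P with _ | r
  · refine ⟨p, ?_, by simp [hP]⟩
    rw [ev_none] at h
    rw [mem_Fm] at hp ⊢
    intro n hn
    have : (P1Pt.deg (none : P1Pt Fq) : ℤ) = 1 := rfl
    by_cases h1 : d < n
    · exact hp n h1
    · have : n = d.toNat := by omega
      rw [this]; exact h
  · obtain ⟨p', hp'⟩ := AdjoinRoot.mk_eq_zero.1 h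
    refine ⟨p', ?_, hp'⟩
    by_cases h0 : p' = 0
    · rw [h0]; exact zero_mem _
    have hr := r.2.2.ne_zero
    have hpne : p ≠ 0 := by rw [hp']; exact mul_ne_zero hr h0
    by_cases hd : d < 0
    · exact absurd (Fm_neg hd hp) hpne
    push Not at hd
    have h3 := (Fm_iff hd).1 hp
    rw [hp', Polynomial.natDegree_mul hr h0] at h3
    have : (P1Pt.deg (some r : P1Pt Fq) : ℤ) = r.1.natDegree := rfl
    rw [Fm_iff (by omega)]
    omega

theorem vanish {d : ℤ} (D : Finset (P1Pt Fq)) {p : Fq[X]} (hp : p ∈ Fm Fq d)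
    (h : ∀ P ∈ D, ev d P p = 0) (hd : d < degD D) : p = 0 := by
  induction D using Finset.induction_on generalizing d p with
  | empty => exact Fm_neg (by simpa [degD] using hd) hp
  | insert P D hPD ih =>
    obtain ⟨p', hp', rfl⟩ := hP_div P hp (h P (Finset.mem_insert_self _ _))
    have : p' = 0 := by
      apply ih hp'
      · intro P' hP'
        have h1 := h P' (Finset.mem_insert_of_mem hP')
        rw [show d = P.deg + (d - P.deg) by ring, ev_mul _ (hP_mem P) hp'] at h1
        exact (res_mul h1).resolve_left (hP_ev_ne (by rintro rfl; exact hPD hP'))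
      · unfold degD at *
        rw [Finset.sum_insert hPD] at hd
        push_cast at *
        linarith
    rw [this, mul_zero]

theorem ev_lift {d : ℤ} (P : P1Pt Fq) (t : P1Pt.Res P) (hd : (P.deg : ℤ) ≤ d + 1) :
    ∃ p ∈ Fm Fq d, ev d P p = t := by
  rcases P with _ | r
  · have : (P1Pt.deg (none : P1Pt Fq) : ℤ) = 1 := rfl
    refine ⟨Polynomial.monomial d.toNat (t : Fq), ?_, ?_⟩
    · rw [Fm_iff (by omega)]; exact Polynomial.natDegree_monomial_le _
    · rw [ev_none]; exact Polynomial.coeff_monomial_same _ _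
  · obtain ⟨p, rfl⟩ := AdjoinRoot.mk_surjective (t : AdjoinRoot r.1)
    have : (P1Pt.deg (some r : P1Pt Fq) : ℤ) = r.1.natDegree := rfl
    have hpos := r.2.2.natDegree_pos
    refine ⟨p %ₘ r.1, ?_, ?_⟩
    · rw [Fm_iff (by omega)]
      have := Polynomial.natDegree_modByMonic_lt p r.2.1 (r.2.2.ne_one)
      omega
    · rw [ev_some]
      exact (AdjoinRoot.mk_eq_mk.2 (by
        rw [Polynomial.modByMonic_eq_sub_mul_div]
        exact ⟨-(p /ₘ r.1), by ring⟩))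

theorem interp {d : ℤ} (D : Finset (P1Pt Fq)) (t : (P : P1Pt Fq) → P1Pt.Res P)
    (hd : (degD D : ℤ) ≤ d + 1) : ∃ p ∈ Fm Fq d, ∀ P ∈ D, ev d P p = t P := by
  induction D using Finset.induction_on generalizing d t with
  | empty => exact ⟨0, zero_mem _, by simp⟩
  | insert P D hPD ih =>
    have hd' : (P.deg : ℤ) + degD D ≤ d + 1 := by
      unfold degD at *
      rw [Finset.sum_insert hPD] at hd
      push_cast at *
      linarith
    obtain ⟨p1, hp1, he1⟩ := ev_lift (d := d) P (t P) (by omega)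
    have hinv : ∀ P' : P1Pt Fq, ∃ y, P' ≠ P → y * ev P.deg P' (hP P) = 1 := by
      intro P'
      by_cases h : P' = P
      · exact ⟨0, fun h' => absurd h h'⟩
      · obtain ⟨y, hy⟩ := res_unit (hP_ev_ne h)
        exact ⟨y, fun _ => hy⟩
    choose y hy using hinv
    obtain ⟨p2, hp2, he2⟩ := ih (d := d - P.deg) (fun P' => y P' * (t P' - ev d P' p1)) (by omega)
    have hdd : d = P.deg + (d - P.deg) := by ring
    refine ⟨p1 + hP P * p2, ?_, ?_⟩
    · refine add_mem hp1 ?_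
      have := Fm_mul (hP_mem P) hp2
      rwa [← hdd] at this
    · intro P' hP'
      have hev : ev d P' (hP P * p2) = ev P.deg P' (hP P) * ev (d - P.deg) P' p2 := by
        rw [← ev_mul _ (hP_mem P) hp2, ← hdd]
      rw [map_add, hev]
      rcases Finset.mem_insert.1 hP' with rfl | hP2
      · rw [hP_ev_self, he1]; ring
      · rw [he2 P' hP2]
        have := hy P' (by rintro rfl; exact hPD hP2)
        linear_combination (t P' - ev d P' p1) * this

theorem finrank_Fm (d : ℤ) : Module.finrank Fq (Fm Fq d) = (d + 1).toNat := by
  unfold Fm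
  rw [(Polynomial.degreeLTEquiv Fq _).finrank_eq]
  simp

instance (d : ℤ) : Module.Finite Fq (Fm Fq d) :=
  Module.Finite.equiv (Polynomial.degreeLTEquiv Fq _).symm

theorem res_finite (P : P1Pt Fq) : Module.Finite Fq (P1Pt.Res P) ∧
    Module.finrank Fq (P1Pt.Res P) = P.deg := by
  rcases P with _ | r
  · exact ⟨inferInstanceAs (Module.Finite Fq Fq), Module.finrank_self Fq⟩
  · refine ⟨(AdjoinRoot.powerBasis' r.2.1).finite, ?_⟩
    have := (AdjoinRoot.powerBasis' r.2.1).finrank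
    exact this

instance (P : P1Pt Fq) : Module.Finite Fq (P1Pt.Res P) := (res_finite P).1

/-- value of a linear form at a marked point. -/
def evU (m k : ℤ) (P : P1Pt Fq) (mk : Option (P1Pt.Res P)) : Fq[X] × Fq[X] →ₗ[Fq] P1Pt.Res P :=
  match mk with
  | some z => (LinearMap.mulRight Fq z).comp ((ev m P).comp (LinearMap.fst Fq _ _)) +
      (ev (m - k) P).comp (LinearMap.snd Fq _ _)
  | none => (ev m P).comp (LinearMap.fst Fq _ _)

theorem evU_some (m k : ℤ) (P : P1Pt Fq) (z : P1Pt.Res P) (c : Fq[X] × Fq[X]) :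
    evU m k P (some z) c = ev m P c.1 * z + ev (m - k) P c.2 := rfl
theorem evU_none (m k : ℤ) (P : P1Pt Fq) (c : Fq[X] × Fq[X]) :
    evU m k P none c = ev m P c.1 := rfl

theorem exists_u (k : ℕ) (D : Finset (P1Pt Fq)) (pt : (P : P1Pt Fq) → Option (P1Pt.Res P)) :
    ∃ m : ℕ, 2 * m ≤ degD D + k ∧ ∃ c : Fq[X] × Fq[X], c ≠ 0 ∧ c.1 ∈ Fm Fq m ∧
      c.2 ∈ Fm Fq (m - k) ∧ ∀ P ∈ D, evU m k P (pt P) c = 0 := by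
  refine ⟨(degD D + k) / 2, by omega, ?_⟩
  set m := (degD D + k) / 2 with hm
  let φ : (Fm Fq m × Fm Fq (m - k)) →ₗ[Fq] ((P : D) → P1Pt.Res P.1) :=
    LinearMap.pi fun P => (evU m k P.1 (pt P.1)).comp
      (LinearMap.prodMap (Fm Fq m).subtype (Fm Fq (m - k)).subtype)
  have hfr : Module.finrank Fq ((P : D) → P1Pt.Res P.1) = degD D := by
    rw [Module.finrank_pi_fintype]
    unfold degD
    rw [← Finset.sum_coe_sort D]
    exact Finset.sum_congr rfl fun P _ => (res_finite P.1).2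
  have hlt : Module.finrank Fq ((P : D) → P1Pt.Res P.1) <
      Module.finrank Fq (Fm Fq m × Fm Fq (m - k)) := by
    rw [hfr, Module.finrank_prod, finrank_Fm, finrank_Fm]
    omega
  have hker := LinearMap.ker_ne_bot_of_finrank_lt (f := φ) hlt
  obtain ⟨c, hc, hc0⟩ := (Submodule.ne_bot_iff _).1 hker
  refine ⟨(c.1, c.2), ?_, c.1.2, c.2.2, ?_⟩
  · intro h
    apply hc0
    rw [Prod.ext_iff] at h
    exact Prod.ext (Subtype.ext h.1) (Subtype.ext h.2)
  · intro P hP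
    exact congrFun (LinearMap.mem_ker.1 hc) ⟨P, hP⟩

theorem evU_hP {m k : ℤ} {P P' : P1Pt Fq} (mk : Option (P1Pt.Res P')) {c : Fq[X] × Fq[X]}
    (h1 : c.1 ∈ Fm Fq (m - P.deg)) (h2 : c.2 ∈ Fm Fq (m - k - P.deg)) :
    evU m k P' mk (hP P * c.1, hP P * c.2) = ev P.deg P' (hP P) * evU (m - P.deg) k P' mk c := by
  have e1 : ev m P' (hP P * c.1) = ev P.deg P' (hP P) * ev (m - P.deg) P' c.1 := by
    rw [← ev_mul _ (hP_mem P) h1]; congr 2; ring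
  have e2 : ev (m - k) P' (hP P * c.2) = ev P.deg P' (hP P) * ev (m - P.deg - k) P' c.2 := by
    rw [show m - P.deg - k = m - k - P.deg by ring, ← ev_mul _ (hP_mem P) h2]; congr 2; ring
  rcases mk with _ | z
  · rw [evU_none, evU_none, e1]
  · rw [evU_some, evU_some, e1, e2]; ring

theorem exists_u' (k : ℕ) (D : Finset (P1Pt Fq)) (pt : (P : P1Pt Fq) → Option (P1Pt.Res P)) :
    ∃ m : ℕ, ∃ c : Fq[X] × Fq[X], c ≠ 0 ∧ c.1 ∈ Fm Fq m ∧
      c.2 ∈ Fm Fq (m - k) ∧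
      2 * (m + degD (D.filter fun P => ¬ evU m k P (pt P) c = 0)) ≤ degD D + k ∧
      ∀ P, ¬ (ev m P c.1 = 0 ∧ ev (m - k) P c.2 = 0) := by
  have hex : ∃ m : ℕ, ∃ c : Fq[X] × Fq[X], c ≠ 0 ∧ c.1 ∈ Fm Fq m ∧
      c.2 ∈ Fm Fq (m - k) ∧
      2 * (m + degD (D.filter fun P => ¬ evU m k P (pt P) c = 0)) ≤ degD D + k := by
    obtain ⟨m, hm, c, hc, h1, h2, h3⟩ := exists_u k D pt
    refine ⟨m, c, hc, h1, h2, ?_⟩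
    rw [Finset.filter_false_of_mem (fun P hP => not_not.2 (h3 P hP))]
    simpa [degD] using hm
  obtain ⟨c, hc, h1, h2, h3⟩ := Nat.find_spec hex
  have hmin := fun m hm => Nat.find_min hex (m := m) hm
  set m := Nat.find hex with hm
  refine ⟨m, c, hc, h1, h2, h3, ?_⟩
  rintro P ⟨hP1, hP2⟩
  obtain ⟨a, ha, ha'⟩ := hP_div P h1 hP1
  obtain ⟨b, hb, hb'⟩ := hP_div P h2 hP2
  have hab : (a, b) ≠ 0 := by
    intro h
    rw [Prod.mk_eq_zero] at h
    apply hc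
    exact Prod.ext (by rw [ha', h.1, mul_zero]; rfl) (by rw [hb', h.2, mul_zero]; rfl)
  have hge : P.deg ≤ m := by
    by_contra hlt
    apply hab
    rw [Fm_neg (by omega) ha, Fm_neg (by omega) hb]
    rfl
  have hpos := deg_pos P
  have hcast : ((m - P.deg : ℕ) : ℤ) = (m : ℤ) - P.deg := by omega
  refine hmin (m - P.deg) (by omega) ⟨(a, b), hab, by rwa [hcast], ?_, ?_⟩
  · rw [hcast, show (m : ℤ) - P.deg - k = m - k - P.deg by ring]; exact hb
  · have hsub : (D.filter fun P' => ¬ evU (m - P.deg : ℕ) k P' (pt P') (a, b) = 0) ⊆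
        insert P (D.filter fun P => ¬ evU m k P (pt P) c = 0) := by
      intro P' hP'
      rw [Finset.mem_filter] at hP'
      rw [Finset.mem_insert, Finset.mem_filter]
      by_cases hPP : P' = P
      · exact Or.inl hPP
      refine Or.inr ⟨hP'.1, fun h0 => hP'.2 ?_⟩
      have hcc : c = (hP P * a, hP P * b) := Prod.ext ha' hb'
      rw [hcc, evU_hP (c := (a, b)) _ ha hb] at h0
      rw [hcast]
      exact (res_mul h0).resolve_left (hP_ev_ne hPP)
    have hle : degD (D.filter fun P' => ¬ evU (m - P.deg : ℕ) k P' (pt P') (a, b) = 0) ≤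
        P.deg + degD (D.filter fun P => ¬ evU m k P (pt P) c = 0) := by
      unfold degD
      refine (Finset.sum_le_sum_of_subset hsub).trans ?_
      by_cases hin : P ∈ (D.filter fun P => ¬ evU m k P (pt P) c = 0)
      · rw [Finset.insert_eq_of_mem hin]; omega
      · rw [Finset.sum_insert hin]
    omega

theorem coprime_of {m k : ℤ} {c : Fq[X] × Fq[X]} (hc : c ≠ 0)
    (h : ∀ P, ¬ (ev m P c.1 = 0 ∧ ev (m - k) P c.2 = 0)) : IsCoprime c.1 c.2 := by
  apply isCoprime_of_irreducible_dvd
  · rintro ⟨h1, h2⟩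
    exact hc (Prod.ext h1 h2)
  · intro z hz h1 h2
    have hmon := Polynomial.monic_mul_leadingCoeff_inv hz.ne_zero
    have hu : IsUnit (C (z.leadingCoeff⁻¹)) := by
      rw [Polynomial.isUnit_C]
      exact (inv_ne_zero (Polynomial.leadingCoeff_ne_zero.2 hz.ne_zero)).isUnit
    have hass : Associated (z * C (z.leadingCoeff⁻¹)) z := associated_mul_unit_left _ _ hu
    apply h (some ⟨_, hmon, hass.irreducible_iff.2 hz⟩)
    rw [ev_some, ev_some]
    exact ⟨AdjoinRoot.mk_eq_zero.2 (hass.dvd.trans h1), AdjoinRoot.mk_eq_zero.2 (hass.dvd.trans h2)⟩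

theorem Fm_cancel {a m : ℤ} {q c : Fq[X]} (hc : c ∈ Fm Fq m) (hc0 : c.coeff m.toNat ≠ 0)
    (h : q * c ∈ Fm Fq a) : q ∈ Fm Fq (a - m) := by
  by_cases hq : q = 0
  · rw [hq]; exact zero_mem _
  have hcne : c ≠ 0 := by rintro rfl; simp at hc0
  by_cases hm : m < 0
  · exact absurd (Fm_neg hm hc) hcne
  by_cases ha : a < 0
  · exact absurd (Fm_neg ha h) (mul_ne_zero hq hcne)
  push Not at hm ha
  have h1 := Polynomial.le_natDegree_of_ne_zero hc0
  have h2 := (Fm_iff ha).1 h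
  rw [Polynomial.natDegree_mul hq hcne] at h2
  rw [Fm_iff (by omega)]
  omega

/-- restriction of a cubic to the curve `u = 0`. -/
def RR (c : Fq[X] × Fq[X]) (A0 A1 A2 A3 : Fq[X]) : Fq[X] :=
  A0 * (c.2 * (c.2 * c.2)) - A1 * (c.1 * (c.2 * c.2)) + A2 * (c.1 * (c.1 * c.2))
    - A3 * (c.1 * (c.1 * c.1))

theorem factor {c : Fq[X] × Fq[X]} (hc : IsCoprime c.1 c.2) {A0 A1 A2 A3 : Fq[X]}
    (h : RR c A0 A1 A2 A3 = 0) : ∃ q0 q1 q2, A0 = q0 * c.1 ∧ A1 = q0 * c.2 + q1 * c.1 ∧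
      A2 = q1 * c.2 + q2 * c.1 ∧ A3 = q2 * c.2 := by
  obtain ⟨c, d⟩ := c
  unfold RR at h
  simp only at *
  by_cases h0 : c = 0
  · subst h0
    rw [isCoprime_zero_left] at hc
    obtain ⟨e, he⟩ := hc.exists_left_inv
    have hA : A0 = 0 := by
      have hd := hc.ne_zero
      have : A0 * (d * (d * d)) = 0 := by linear_combination h
      simpa [hd] using this
    refine ⟨A1 * e, A2 * e, A3 * e, ?_, ?_, ?_, ?_⟩
    · rw [hA]; ring
    · linear_combination -A1 * he
    · linear_combination -A2 * he
    · linear_combination -A3 * he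
  · have hd : c ∣ A0 * d ^ 3 := ⟨A1 * d ^ 2 - A2 * c * d + A3 * c ^ 2, by linear_combination h⟩
    obtain ⟨q0, rfl⟩ := (hc.pow_right (n := 3)).dvd_of_dvd_mul_right hd
    have h1 : q0 * d ^ 3 - A1 * d ^ 2 + A2 * c * d - A3 * c ^ 2 = 0 := by
      apply mul_left_cancel₀ h0; linear_combination h
    have hd : c ∣ (A1 - q0 * d) * d ^ 2 := ⟨A2 * d - A3 * c, by linear_combination -h1⟩
    obtain ⟨q1, hq1⟩ := (hc.pow_right (n := 2)).dvd_of_dvd_mul_right hd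
    have h2 : -q1 * d ^ 2 + A2 * d - A3 * c = 0 := by
      apply mul_left_cancel₀ h0; linear_combination h1 + d ^ 2 * hq1
    have hd : c ∣ (A2 - q1 * d) * d := ⟨A3, by linear_combination h2⟩
    obtain ⟨q2, hq2⟩ := hc.dvd_of_dvd_mul_right hd
    have h3 : q2 * d - A3 = 0 := by
      apply mul_left_cancel₀ h0; linear_combination h2 - d * hq2
    exact ⟨q0, q1, q2, by ring, by linear_combination hq1, by linear_combination hq2,
      by linear_combination -h3⟩

theorem factor_Fm {l m k : ℤ} {c : Fq[X] × Fq[X]} (hc1 : c.1 ∈ Fm Fq m) (hc2 : c.2 ∈ Fm Fq (m - k))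
    (hinf : ¬ (c.1.coeff m.toNat = 0 ∧ c.2.coeff (m - k).toNat = 0))
    {q0 q1 q2 : Fq[X]} (h0 : q0 * c.1 ∈ Fm Fq l) (h1 : q0 * c.2 + q1 * c.1 ∈ Fm Fq (l - k))
    (h2 : q1 * c.2 + q2 * c.1 ∈ Fm Fq (l - 2 * k)) (h3 : q2 * c.2 ∈ Fm Fq (l - 3 * k)) :
    q0 ∈ Fm Fq (l - m) ∧ q1 ∈ Fm Fq (l - m - k) ∧ q2 ∈ Fm Fq (l - m - 2 * k) := by
  by_cases hi : c.1.coeff m.toNat = 0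
  · have hi2 : c.2.coeff (m - k).toNat ≠ 0 := fun h => hinf ⟨hi, h⟩
    have g2 : q2 ∈ Fm Fq (l - m - 2 * k) := by
      have := Fm_cancel hc2 hi2 h3
      rwa [show l - 3 * k - (m - k) = l - m - 2 * k by ring] at this
    have g1 : q1 ∈ Fm Fq (l - m - k) := by
      have e := Fm_mul g2 hc1
      rw [show l - m - 2 * k + m = l - 2 * k by ring] at e
      have := Fm_cancel hc2 hi2 ((Submodule.add_mem_iff_left _ e).1 h2)
      rwa [show l - 2 * k - (m - k) = l - m - k by ring] at this
    have g0 : q0 ∈ Fm Fq (l - m) := by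
      have e := Fm_mul g1 hc1
      rw [show l - m - k + m = l - k by ring] at e
      have := Fm_cancel hc2 hi2 ((Submodule.add_mem_iff_left _ e).1 h1)
      rwa [show l - k - (m - k) = l - m by ring] at this
    exact ⟨g0, g1, g2⟩
  · have g0 : q0 ∈ Fm Fq (l - m) := Fm_cancel hc1 hi h0
    have g1 : q1 ∈ Fm Fq (l - m - k) := by
      have e := Fm_mul g0 hc2
      rw [show l - m + (m - k) = l - k by ring] at e
      have := Fm_cancel hc1 hi ((Submodule.add_mem_iff_right _ e).1 h1)
      rwa [show l - k - m = l - m - k by ring] at this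
    have g2 : q2 ∈ Fm Fq (l - m - 2 * k) := by
      have e := Fm_mul g1 hc2
      rw [show l - m - k + (m - k) = l - 2 * k by ring] at e
      have := Fm_cancel hc1 hi ((Submodule.add_mem_iff_right _ e).1 h2)
      rwa [show l - 2 * k - m = l - m - 2 * k by ring] at this
    exact ⟨g0, g1, g2⟩

theorem Fm_mul' {a b d : ℤ} {p q : Fq[X]} (hp : p ∈ Fm Fq a) (hq : q ∈ Fm Fq b) (h : a + b = d) :
    p * q ∈ Fm Fq d := h ▸ Fm_mul hp hq

theorem ev_mul' {a b d : ℤ} (P : P1Pt Fq) {p q : Fq[X]} (hp : p ∈ Fm Fq a) (hq : q ∈ Fm Fq b)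
    (h : a + b = d) : ev d P (p * q) = ev a P p * ev b P q := h ▸ ev_mul P hp hq

/-- value of a cubic at a marked point -/
def ev3 (l k : ℤ) (P : P1Pt Fq) (mk : Option (P1Pt.Res P)) (A0 A1 A2 A3 : Fq[X]) : P1Pt.Res P :=
  match mk with
  | some z => ev l P A0 * z ^ 3 + ev (l - k) P A1 * z ^ 2 + ev (l - 2 * k) P A2 * z
      + ev (l - 3 * k) P A3
  | none => ev l P A0

section
variable {l m k : ℤ} {c : Fq[X] × Fq[X]} (hc1 : c.1 ∈ Fm Fq m) (hc2 : c.2 ∈ Fm Fq (m - k))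

theorem RR_mem (hc1 : c.1 ∈ Fm Fq m) (hc2 : c.2 ∈ Fm Fq (m - k)) {A0 A1 A2 A3 : Fq[X]}
    (h0 : A0 ∈ Fm Fq l) (h1 : A1 ∈ Fm Fq (l - k))
    (h2 : A2 ∈ Fm Fq (l - 2 * k)) (h3 : A3 ∈ Fm Fq (l - 3 * k)) :
    RR c A0 A1 A2 A3 ∈ Fm Fq (l + 3 * m - 3 * k) := by
  refine sub_mem (add_mem (sub_mem ?_ ?_) ?_) ?_
  · exact Fm_mul' h0 (Fm_mul hc2 (Fm_mul hc2 hc2)) (by ring)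
  · exact Fm_mul' h1 (Fm_mul hc1 (Fm_mul hc2 hc2)) (by ring)
  · exact Fm_mul' h2 (Fm_mul hc1 (Fm_mul hc1 hc2)) (by ring)
  · exact Fm_mul' h3 (Fm_mul hc1 (Fm_mul hc1 hc1)) (by ring)

theorem RR_ev0 (hc1 : c.1 ∈ Fm Fq m) (hc2 : c.2 ∈ Fm Fq (m - k)) {A0 A1 A2 A3 : Fq[X]}
    (P : P1Pt Fq) (h0 : A0 ∈ Fm Fq l) (h1 : A1 ∈ Fm Fq (l - k))
    (h2 : A2 ∈ Fm Fq (l - 2 * k)) (h3 : A3 ∈ Fm Fq (l - 3 * k)) :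
    ev (l + 3 * m - 3 * k) P (RR c A0 A1 A2 A3) =
      ev l P A0 * (ev (m - k) P c.2) ^ 3 - ev (l - k) P A1 * (ev m P c.1 * ev (m - k) P c.2 ^ 2)
      + ev (l - 2 * k) P A2 * (ev m P c.1 ^ 2 * ev (m - k) P c.2)
      - ev (l - 3 * k) P A3 * ev m P c.1 ^ 3 := by
  unfold RR
  rw [map_sub, map_add, map_sub,
    ev_mul' P h0 (Fm_mul hc2 (Fm_mul hc2 hc2)) (by ring),
    ev_mul' P h1 (Fm_mul hc1 (Fm_mul hc2 hc2)) (by ring),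
    ev_mul' P h2 (Fm_mul hc1 (Fm_mul hc1 hc2)) (by ring),
    ev_mul' P h3 (Fm_mul hc1 (Fm_mul hc1 hc1)) (by ring),
    ev_mul P hc2 (Fm_mul hc2 hc2), ev_mul P hc1 (Fm_mul hc2 hc2), ev_mul P hc1 (Fm_mul hc1 hc2),
    ev_mul P hc1 (Fm_mul hc1 hc1), ev_mul P hc2 hc2, ev_mul P hc1 hc2, ev_mul P hc1 hc1]
  ring

theorem RR_ev (hc1 : c.1 ∈ Fm Fq m) (hc2 : c.2 ∈ Fm Fq (m - k))
    (P : P1Pt Fq) (mk : Option (P1Pt.Res P)) (hu : evU m k P mk c = 0)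
    (hn : ¬ (ev m P c.1 = 0 ∧ ev (m - k) P c.2 = 0)) :
    ∃ ρ ρ' : P1Pt.Res P, ρ' * ρ = 1 ∧ ∀ A0 A1 A2 A3 : Fq[X],
    A0 ∈ Fm Fq l → A1 ∈ Fm Fq (l - k) →
    A2 ∈ Fm Fq (l - 2 * k) → A3 ∈ Fm Fq (l - 3 * k) →
    ev (l + 3 * m - 3 * k) P (RR c A0 A1 A2 A3) = ρ * ev3 l k P mk A0 A1 A2 A3 := by
  rcases mk with _ | z
  · rw [evU_none] at hu
    obtain ⟨y, hy⟩ := res_unit (fun h => hn ⟨hu, h⟩)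
    refine ⟨ev (m - k) P c.2 ^ 3, y ^ 3, by rw [← mul_pow, hy, one_pow], ?_⟩
    intro A0 A1 A2 A3 h0 h1 h2 h3
    rw [RR_ev0 hc1 hc2 P h0 h1 h2 h3, hu]
    simp only [ev3]
    ring
  · rw [evU_some] at hu
    have hb : ev (m - k) P c.2 = - (ev m P c.1 * z) := by linear_combination hu
    have hx : ev m P c.1 ≠ 0 := by
      intro h
      apply hn
      rw [hb, h]
      simp
    obtain ⟨y, hy⟩ := res_unit hx
    refine ⟨- ev m P c.1 ^ 3, - y ^ 3, by rw [neg_mul_neg, ← mul_pow, hy, one_pow], ?_⟩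
    intro A0 A1 A2 A3 h0 h1 h2 h3
    rw [RR_ev0 hc1 hc2 P h0 h1 h2 h3, hb]
    simp only [ev3]
    ring

theorem RR_surj (hc1 : c.1 ∈ Fm Fq m) (hc2 : c.2 ∈ Fm Fq (m - k))
    (hcop : IsCoprime c.1 c.2)
    (hinf : ¬ (c.1.coeff m.toNat = 0 ∧ c.2.coeff (m - k).toNat = 0))
    (hk : 0 ≤ k) (hb : 0 ≤ l - m - 2 * k + 1) {g : Fq[X]} (hg : g ∈ Fm Fq (l + 3 * m - 3 * k)) :
    ∃ A0 ∈ Fm Fq l, ∃ A1 ∈ Fm Fq (l - k), ∃ A2 ∈ Fm Fq (l - 2 * k), ∃ A3 ∈ Fm Fq (l - 3 * k),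
      RR c A0 A1 A2 A3 = g := by
  let φ : (Fm Fq l × Fm Fq (l - k) × Fm Fq (l - 2 * k) × Fm Fq (l - 3 * k)) →ₗ[Fq]
      Fm Fq (l + 3 * m - 3 * k) :=
    { toFun := fun A => ⟨RR c A.1 A.2.1 A.2.2.1 A.2.2.2,
        RR_mem hc1 hc2 A.1.2 A.2.1.2 A.2.2.1.2 A.2.2.2.2⟩
      map_add' := fun A B => Subtype.ext (by simp [RR]; ring)
      map_smul' := fun r A => Subtype.ext (by simp [RR, smul_sub, smul_add]) }
  let ψ : (Fm Fq (l - m) × Fm Fq (l - m - k) × Fm Fq (l - m - 2 * k)) →ₗ[Fq]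
      (Fm Fq l × Fm Fq (l - k) × Fm Fq (l - 2 * k) × Fm Fq (l - 3 * k)) :=
    { toFun := fun q => (⟨q.1 * c.1, Fm_mul' q.1.2 hc1 (by ring)⟩,
        ⟨q.1 * c.2 + q.2.1 * c.1, add_mem (Fm_mul' q.1.2 hc2 (by ring))
          (Fm_mul' q.2.1.2 hc1 (by ring))⟩,
        ⟨q.2.1 * c.2 + q.2.2 * c.1, add_mem (Fm_mul' q.2.1.2 hc2 (by ring))
          (Fm_mul' q.2.2.2 hc1 (by ring))⟩,
        ⟨q.2.2 * c.2, Fm_mul' q.2.2.2 hc2 (by ring)⟩)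
      map_add' := fun q r => by
        refine Prod.ext (Subtype.ext ?_) (Prod.ext (Subtype.ext ?_) (Prod.ext (Subtype.ext ?_)
          (Subtype.ext ?_))) <;> simp <;> ring
      map_smul' := fun r q => by
        refine Prod.ext (Subtype.ext ?_) (Prod.ext (Subtype.ext ?_) (Prod.ext (Subtype.ext ?_)
          (Subtype.ext ?_))) <;> simp }
  have hker : LinearMap.ker φ ≤ LinearMap.range ψ := by
    intro A hA
    have hA' : RR c A.1 A.2.1 A.2.2.1 A.2.2.2 = 0 := congrArg Subtype.val (LinearMap.mem_ker.1 hA)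
    obtain ⟨q0, q1, q2, e0, e1, e2, e3⟩ := factor hcop hA'
    obtain ⟨g0, g1, g2⟩ := factor_Fm (l := l) hc1 hc2 hinf (q0 := q0) (q1 := q1) (q2 := q2)
      (e0 ▸ A.1.2) (e1 ▸ A.2.1.2) (e2 ▸ A.2.2.1.2) (e3 ▸ A.2.2.2.2)
    refine ⟨(⟨q0, g0⟩, ⟨q1, g1⟩, ⟨q2, g2⟩), ?_⟩
    exact Prod.ext (Subtype.ext e0.symm) (Prod.ext (Subtype.ext e1.symm)
      (Prod.ext (Subtype.ext e2.symm) (Subtype.ext e3.symm)))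
  have h1 := Submodule.finrank_mono hker
  have h2 := LinearMap.finrank_range_le ψ
  have h3 := LinearMap.finrank_range_add_finrank_ker φ
  have h4 := Submodule.finrank_le (LinearMap.range φ)
  simp only [Module.finrank_prod, finrank_Fm] at h2 h3 h4
  have h5 : Module.finrank Fq (LinearMap.range φ) = Module.finrank Fq (Fm Fq (l + 3 * m - 3 * k)) := by
    rw [finrank_Fm]
    omega
  have h6 := Submodule.eq_top_of_finrank_eq h5
  obtain ⟨A, hA⟩ : (⟨g, hg⟩ : Fm Fq (l + 3 * m - 3 * k)) ∈ LinearMap.range φ := by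
    rw [h6]; trivial
  exact ⟨A.1, A.1.2, A.2.1, A.2.1.2, A.2.2.1, A.2.2.1.2, A.2.2.2, A.2.2.2.2,
    congrArg Subtype.val hA⟩

theorem ev3_add (P : P1Pt Fq) (mk : Option (P1Pt.Res P)) (A0 A1 A2 A3 B0 B1 B2 B3 : Fq[X]) :
    ev3 l k P mk (A0 + B0) (A1 + B1) (A2 + B2) (A3 + B3) =
      ev3 l k P mk A0 A1 A2 A3 + ev3 l k P mk B0 B1 B2 B3 := by
  rcases mk with _ | z
  · simp only [ev3, map_add]
  · simp only [ev3, map_add]; ring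

theorem ev3_mul (hc1 : c.1 ∈ Fm Fq m) (hc2 : c.2 ∈ Fm Fq (m - k)) (P : P1Pt Fq)
    (mk : Option (P1Pt.Res P)) {q0 q2 : Fq[X]} (h0 : q0 ∈ Fm Fq (l - m))
    (h2 : q2 ∈ Fm Fq (l - m - 2 * k)) :
    ev3 l k P mk (q0 * c.1) (q0 * c.2) (q2 * c.1) (q2 * c.2) =
      (match mk with
       | some z => ev (l - m) P q0 * z ^ 2 + ev (l - m - 2 * k) P q2
       | none => ev (l - m) P q0) * evU m k P mk c := by
  rcases mk with _ | z
  · simp only [ev3, evU_none]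
    rw [ev_mul' P h0 hc1 (by ring)]
  · simp only [ev3, evU_some]
    rw [ev_mul' P h0 hc1 (by ring), ev_mul' P h0 hc2 (by ring), ev_mul' P h2 hc1 (by ring),
      ev_mul' P h2 hc2 (by ring)]
    ring

end

theorem degD_filter (D : Finset (P1Pt Fq)) (p : P1Pt Fq → Prop) :
    degD (D.filter p) + degD (D.filter fun P => ¬ p P) = degD D :=
  Finset.sum_filter_add_sum_filter_not D p _

theorem core (l k : ℕ) (D : Finset (P1Pt Fq)) (pt : (P : P1Pt Fq) → Option (P1Pt.Res P))
    (hrange : degD D + 5 * k ≤ 2 * l) :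
    (∀ t : (P : P1Pt Fq) → P1Pt.Res P,
      ∃ A0 ∈ Fm Fq l, ∃ A1 ∈ Fm Fq (l - k), ∃ A2 ∈ Fm Fq (l - 2 * k), ∃ A3 ∈ Fm Fq (l - 3 * k),
        ∀ P ∈ D, ev3 l k P (pt P) A0 A1 A2 A3 = t P) ∨
    (∀ A0 ∈ Fm Fq l, ∀ A1 ∈ Fm Fq (l - k), ∀ A2 ∈ Fm Fq (l - 2 * k), ∀ A3 ∈ Fm Fq (l - 3 * k),
      (∀ P ∈ D, ev3 l k P (pt P) A0 A1 A2 A3 = 0) →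
      ∃ m : ℤ, ∃ c : Fq[X] × Fq[X], c ≠ 0 ∧ c.1 ∈ Fm Fq m ∧ c.2 ∈ Fm Fq (m - k) ∧
        ∃ q0 ∈ Fm Fq (l - m), ∃ q1 ∈ Fm Fq (l - m - k), ∃ q2 ∈ Fm Fq (l - m - 2 * k),
        A0 = q0 * c.1 ∧ A1 = q0 * c.2 + q1 * c.1 ∧ A2 = q1 * c.2 + q2 * c.1 ∧ A3 = q2 * c.2) := by
  obtain ⟨m, c, hc, hc1, hc2, hdeg, hn⟩ := exists_u' k D pt
  have hcop := coprime_of hc hn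
  have hinf : ¬ (c.1.coeff (m : ℤ).toNat = 0 ∧ c.2.coeff ((m : ℤ) - k).toNat = 0) := hn none
  have hsum := degD_filter D (fun P => evU m k P (pt P) c = 0)
  set D1 := D.filter (fun P => evU m k P (pt P) c = 0) with hD1
  set D2 := D.filter (fun P => ¬ evU m k P (pt P) c = 0) with hD2
  have hmem : ∀ P ∈ D, P ∉ D1 → P ∈ D2 := by
    intro P hP h
    rw [hD2, Finset.mem_filter]
    exact ⟨hP, fun h' => h (Finset.mem_filter.2 ⟨hP, h'⟩)⟩
  have hu1 : ∀ P ∈ D1, evU m k P (pt P) c = 0 := fun P hP => (Finset.mem_filter.1 hP).2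
  have hu2 : ∀ P ∈ D2, evU m k P (pt P) c ≠ 0 := fun P hP => (Finset.mem_filter.1 hP).2
  by_cases hcase : ((l : ℤ) + 3 * m - 3 * k) < degD D1
  · right
    intro A0 h0 A1 h1 A2 h2 A3 h3 hv
    have hR : RR c A0 A1 A2 A3 = 0 := by
      refine vanish D1 (RR_mem hc1 hc2 h0 h1 h2 h3) ?_ hcase
      intro P hP
      obtain ⟨ρ, ρ', -, hρ⟩ := RR_ev (l := l) hc1 hc2 P (pt P) (hu1 P hP) (hn P)
      rw [hρ _ _ _ _ h0 h1 h2 h3, hv P (Finset.mem_filter.1 hP).1, mul_zero]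
    obtain ⟨q0, q1, q2, e0, e1, e2, e3⟩ := factor hcop hR
    obtain ⟨g0, g1, g2⟩ := factor_Fm (l := l) hc1 hc2 hinf (q0 := q0) (q1 := q1) (q2 := q2)
      (e0 ▸ h0) (e1 ▸ h1) (e2 ▸ h2) (e3 ▸ h3)
    exact ⟨m, c, hc, hc1, hc2, q0, g0, q1, g1, q2, g2, e0, e1, e2, e3⟩
  · left
    intro t
    push Not at hcase
    have hρ : ∀ P : P1Pt Fq, ∃ ρ ρ' : P1Pt.Res P, P ∈ D1 → (ρ' * ρ = 1 ∧ ∀ A0 A1 A2 A3 : Fq[X],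
        A0 ∈ Fm Fq l → A1 ∈ Fm Fq (l - k) → A2 ∈ Fm Fq (l - 2 * k) → A3 ∈ Fm Fq (l - 3 * k) →
        ev (l + 3 * m - 3 * k) P (RR c A0 A1 A2 A3) = ρ * ev3 l k P (pt P) A0 A1 A2 A3) := by
      intro P
      by_cases hP : P ∈ D1
      · obtain ⟨ρ, ρ', h⟩ := RR_ev (l := l) hc1 hc2 P (pt P) (hu1 P hP) (hn P)
        exact ⟨ρ, ρ', fun _ => h⟩
      · exact ⟨0, 0, fun h => absurd h hP⟩
    choose ρ ρ' hρ using hρ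
    obtain ⟨g, hg, hgt⟩ := interp (d := (l : ℤ) + 3 * m - 3 * k) D1 (fun P => ρ P * t P) (by omega)
    obtain ⟨A0, h0, A1, h1, A2, h2, A3, h3, hA⟩ := RR_surj (l := l) hc1 hc2 hcop hinf
      (by omega) (by omega) hg
    have hA1 : ∀ P ∈ D1, ev3 l k P (pt P) A0 A1 A2 A3 = t P := by
      intro P hP
      obtain ⟨hr, hr'⟩ := hρ P hP
      have := hr' _ _ _ _ h0 h1 h2 h3
      rw [hA, hgt P hP] at this
      linear_combination (t P - ev3 l k P (pt P) A0 A1 A2 A3) * hr - ρ' P * this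
    have hy : ∀ P : P1Pt Fq, ∃ y : P1Pt.Res P, P ∈ D2 → y * evU m k P (pt P) c = 1 := by
      intro P
      by_cases hP : P ∈ D2
      · obtain ⟨y, hy⟩ := res_unit (hu2 P hP)
        exact ⟨y, fun _ => hy⟩
      · exact ⟨0, fun h => absurd h hP⟩
    choose y hy using hy
    obtain ⟨q0, g0, hq0⟩ := interp (d := (l : ℤ) - m) D2
      (fun P => if pt P = none then y P * (t P - ev3 l k P (pt P) A0 A1 A2 A3) else 0) (by omega)
    obtain ⟨q2, g2, hq2⟩ := interp (d := (l : ℤ) - m - 2 * k) D2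
      (fun P => y P * (t P - ev3 l k P (pt P) A0 A1 A2 A3)) (by omega)
    refine ⟨A0 + q0 * c.1, add_mem h0 (Fm_mul' g0 hc1 (by ring)),
      A1 + q0 * c.2, add_mem h1 (Fm_mul' g0 hc2 (by ring)),
      A2 + q2 * c.1, add_mem h2 (Fm_mul' g2 hc1 (by ring)),
      A3 + q2 * c.2, add_mem h3 (Fm_mul' g2 hc2 (by ring)), ?_⟩
    intro P hP
    rw [ev3_add, ev3_mul hc1 hc2 P (pt P) g0 g2]
    by_cases hP1 : P ∈ D1
    · rw [hu1 P hP1, mul_zero, add_zero, hA1 P hP1]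
    · have hP2 := hmem P hP hP1
      have a0 := hq0 P hP2
      have a2 := hq2 P hP2
      have ay := hy P hP2
      generalize pt P = mk at *
      rcases mk with _ | z
      · simp only [if_true] at a0 ⊢
        rw [a0]
        linear_combination (t P - ev3 l k P none A0 A1 A2 A3) * ay
      · simp only [reduceCtorEq, if_false] at a0 ⊢
        rw [a0, a2]
        linear_combination (t P - ev3 l k P (some z) A0 A1 A2 A3) * ay

/-- rehomogenization -/
theorem hom_iff {d : ℤ} {A : MvPolynomial (Fin 2) Fq} (hA : IsHomOfDeg A d) :
    ∃ p ∈ Fm Fq d, A = p.homogenize d.toNat := by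
  by_cases hd : d < 0
  · exact ⟨0, zero_mem _, by rw [hA.2 hd]; simp⟩
  push Not at hd
  have key := Polynomial.homogenize_eq_of_isHomogeneous hA.1 rfl
  refine ⟨_, ?_, key.symm⟩
  rw [Fm_iff hd]
  have h2 : (MvPolynomial.aeval ![(X : Fq[X]), 1] A) =
      ∑ v ∈ A.support, C (A.coeff v) * X ^ (v 0) := by
    rw [MvPolynomial.aeval_def, MvPolynomial.eval₂_eq']
    simp [Fin.prod_univ_two]
  rw [h2]
  refine Polynomial.natDegree_sum_le_of_forall_le _ _ fun v hv => ?_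
  refine (Polynomial.natDegree_C_mul_X_pow_le _ _).trans ?_
  have h3 := hA.1 (MvPolynomial.mem_support_iff.1 hv)
  rw [← h3]
  simp [Finsupp.weight_apply, Finsupp.sum_fintype, Fin.sum_univ_two]

theorem hom_mk {d : ℤ} {p : Fq[X]} (hp : p ∈ Fm Fq d) : IsHomOfDeg (p.homogenize d.toNat) d :=
  ⟨Polynomial.isHomogeneous_homogenize p, fun hd => by rw [Fm_neg hd hp]; simp⟩

theorem resEval_hom {d : ℤ} {p : Fq[X]} (hp : p ∈ Fm Fq d) (P : P1Pt Fq) :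
    resEval P (p.homogenize d.toNat) = ev d P p := by
  by_cases hd : d < 0
  · rw [Fm_neg hd hp]; simp [resEval]
  push Not at hd
  have hdeg := (Fm_iff hd).1 hp
  rcases P with _ | r
  · rw [ev_none]
    have h : ∀ n : ℕ, MvPolynomial.aeval ![(1 : Fq), 0] (p.homogenize n) = p.coeff n := by
      intro n
      rw [Polynomial.homogenize, map_sum, Finset.sum_eq_single (n, 0)]
      · simp [MvPolynomial.aeval_monomial, Finsupp.prod_fintype]
      · rintro ⟨a, b⟩ hab hne
        have hab := Finset.HasAntidiagonal.mem_antidiagonal.1 hab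
        have hb : b ≠ 0 := by rintro rfl; apply hne; simpa using hab
        simp [MvPolynomial.aeval_monomial, Finsupp.prod_fintype, hb]
      · intro h; simp at h
    exact h _
  · rw [ev_some]
    have h := Polynomial.aeval_homogenize_of_eq_one hdeg ![AdjoinRoot.root r.1, 1] rfl
    refine Eq.trans h ?_
    exact AdjoinRoot.aeval_eq p

theorem hom_mul {a b d : ℤ} {p q : Fq[X]} (hp : p ∈ Fm Fq a) (hq : q ∈ Fm Fq b) (h : a + b = d) :
    (p * q).homogenize d.toNat = p.homogenize a.toNat * q.homogenize b.toNat := by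
  by_cases ha : a < 0
  · rw [Fm_neg ha hp]; simp
  by_cases hb : b < 0
  · rw [Fm_neg hb hq]; simp
  push Not at ha hb
  rw [← Polynomial.homogenize_mul p q ((Fm_iff ha).1 hp) ((Fm_iff hb).1 hq)]
  congr 1
  omega

theorem hom_eq_zero {d : ℤ} {p : Fq[X]} (hp : p ∈ Fm Fq d) (h : p.homogenize d.toNat = 0) :
    p = 0 := by
  by_cases hd : d < 0
  · exact Fm_neg hd hp
  · push Not at hd
    exact Polynomial.eq_zero_of_homogenize_eq_zero ((Fm_iff hd).1 hp) h

theorem evalAt3_hom {l k : ℤ} (P : P1Pt Fq) (mk : Option (P1Pt.Res P)) {A0 A1 A2 A3 : Fq[X]}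
    (h0 : A0 ∈ Fm Fq l) (h1 : A1 ∈ Fm Fq (l - k))
    (h2 : A2 ∈ Fm Fq (l - 2 * k)) (h3 : A3 ∈ Fm Fq (l - 3 * k))
    (s : Fin 4 → MvPolynomial (Fin 2) Fq) (e0 : s 0 = A0.homogenize l.toNat)
    (e1 : s 1 = A1.homogenize (l - k).toNat) (e2 : s 2 = A2.homogenize (l - 2 * k).toNat)
    (e3 : s 3 = A3.homogenize (l - 3 * k).toNat) :
    evalAt3 P mk s = ev3 l k P mk A0 A1 A2 A3 := by
  rcases mk with _ | z
  · simp only [evalAt3, ev3, e0, resEval_hom h0]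
  · simp only [evalAt3, ev3, e0, e1, e2, e3, resEval_hom h0, resEval_hom h1, resEval_hom h2,
      resEval_hom h3]

/-- Let `D` be a reduced effective divisor on `P¹`, `k ≥ 0`,
`𝒟 ⊆ F_k` a `D`-marking, `ℓ ≥ 0`, and `L = O(3,ℓ)` on `F_k`.  If
`ℓ − 2k ≥ (deg D + k)/2` (i.e. `deg D + 5k ≤ 2ℓ`), then either the restriction map
`α : H⁰(F_k, L) → H⁰(𝒟, O_𝒟)` is surjective, or every section in `ker α` is
horizontally reducible. -/
theorem statement_12 (Fq : Type) [Field Fq] [Fintype Fq] (ℓ k : ℕ)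
    (D : Finset (P1Pt Fq)) (pt : (P : P1Pt Fq) → Option (P1Pt.Res P))
    (hrange : degD D + 5 * k ≤ 2 * ℓ) :
    (∀ t : (P : P1Pt Fq) → P ∈ D → P1Pt.Res P,
      ∃ s ∈ SecSet 3 ℓ k, ∀ P : P1Pt Fq, ∀ hP : P ∈ D, evalAt3 P (pt P) s = t P hP) ∨
    (∀ s ∈ SecSet 3 ℓ k, (∀ P ∈ D, evalAt3 P (pt P) s = 0) → HorizRed k s) := by

  rcases core ℓ k D pt hrange with h | h
  · left
    intro t
    obtain ⟨A0, h0, A1, h1, A2, h2, A3, h3, hA⟩ := h (fun P => if hP : P ∈ D then t P hP else 0)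
    refine ⟨![A0.homogenize (ℓ : ℤ).toNat, A1.homogenize ((ℓ : ℤ) - k).toNat,
      A2.homogenize ((ℓ : ℤ) - 2 * k).toNat, A3.homogenize ((ℓ : ℤ) - 3 * k).toNat], ?_, ?_⟩
    · intro i
      fin_cases i
      · simpa using hom_mk h0
      · simpa using hom_mk h1
      · simpa using hom_mk h2
      · simpa using hom_mk h3
    · intro P hP
      rw [evalAt3_hom P (pt P) h0 h1 h2 h3 _ rfl rfl rfl rfl, hA P hP, dif_pos hP]
  · right
    intro s hs hv
    obtain ⟨A0, h0, e0⟩ := hom_iff (d := ℓ) (by simpa using hs 0)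
    obtain ⟨A1, h1, e1⟩ := hom_iff (d := (ℓ : ℤ) - k) (by simpa using hs 1)
    obtain ⟨A2, h2, e2⟩ := hom_iff (d := (ℓ : ℤ) - 2 * k) (by simpa using hs 2)
    obtain ⟨A3, h3, e3⟩ := hom_iff (d := (ℓ : ℤ) - 3 * k) (by simpa using hs 3)
    by_cases hs0 : s = 0
    · exact Or.inl hs0
    right
    obtain ⟨m, c, hc, hc1, hc2, q0, g0, q1, g1, q2, g2, f0, f1, f2, f3⟩ :=
      h A0 h0 A1 h1 A2 h2 A3 h3 (fun P hP => by
        rw [← evalAt3_hom P (pt P) h0 h1 h2 h3 s e0 e1 e2 e3, hv P hP])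
    have s0 : s 0 = q0.homogenize ((ℓ : ℤ) - m).toNat * c.1.homogenize m.toNat := by
      rw [e0, f0, hom_mul g0 hc1 (by ring)]
    have s1 : s 1 = q0.homogenize ((ℓ : ℤ) - m).toNat * c.2.homogenize (m - k).toNat +
        q1.homogenize ((ℓ : ℤ) - m - k).toNat * c.1.homogenize m.toNat := by
      rw [e1, f1, Polynomial.homogenize_add, hom_mul g0 hc2 (by ring), hom_mul g1 hc1 (by ring)]
    have s2 : s 2 = q1.homogenize ((ℓ : ℤ) - m - k).toNat * c.2.homogenize (m - k).toNat +
        q2.homogenize ((ℓ : ℤ) - m - 2 * k).toNat * c.1.homogenize m.toNat := by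
      rw [e2, f2, Polynomial.homogenize_add, hom_mul g1 hc2 (by ring), hom_mul g2 hc1 (by ring)]
    have s3 : s 3 = q2.homogenize ((ℓ : ℤ) - m - 2 * k).toNat * c.2.homogenize (m - k).toNat := by
      rw [e3, f3, hom_mul g2 hc2 (by ring)]
    refine ⟨ℓ - m, m, ![q0.homogenize ((ℓ : ℤ) - m).toNat, q1.homogenize ((ℓ : ℤ) - m - k).toNat,
      q2.homogenize ((ℓ : ℤ) - m - 2 * k).toNat],
      ![c.1.homogenize m.toNat, c.2.homogenize (m - k).toNat], ?_, ?_, ?_, ?_, s0, s1, s2, s3⟩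
    · intro hB
      have b0 : q0.homogenize ((ℓ : ℤ) - m).toNat = 0 := congrFun hB 0
      have b1 : q1.homogenize ((ℓ : ℤ) - m - k).toNat = 0 := congrFun hB 1
      have b2 : q2.homogenize ((ℓ : ℤ) - m - 2 * k).toNat = 0 := congrFun hB 2
      apply hs0
      funext i
      fin_cases i
      · rw [b0, zero_mul] at s0; exact s0
      · rw [b0, b1, zero_mul, zero_mul, add_zero] at s1; exact s1
      · rw [b1, b2, zero_mul, zero_mul, add_zero] at s2; exact s2
      · rw [b2, zero_mul] at s3; exact s3
    · intro hC
      have b0 : c.1.homogenize m.toNat = 0 := congrFun hC 0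
      have b1 : c.2.homogenize (m - k).toNat = 0 := congrFun hC 1
      exact hc (Prod.ext (hom_eq_zero hc1 b0) (hom_eq_zero hc2 b1))
    · intro j
      fin_cases j
      · simpa using hom_mk g0
      · simpa using hom_mk g1
      · simpa using hom_mk g2
    · intro j
      fin_cases j
      · simpa using hom_mk hc1
      · simpa using hom_mk hc2

end Stmt12
end
end

section
/- Let ℓ, k, c ≥ 0 be integers with ℓ − 3k ≥ 0 and ℓ − 2k ≥ c, and let σ ∈ H⁰(F_k, O(1,c)) be a nonzero irreducible section. Let Img(σ) be the image of multiplication by σ: H⁰(F_k, O(2, ℓ−c)) → H⁰(F_k, O(3,ℓ)). Then for every reduced effective divisor D on P¹: Σ_{s ∈ Img(σ), s ≠ 0} r_D(s) = O(5^{ω(D)} q^{3ℓ−3k−3c}) and Σ_{s ∈ Img(σ), s ≠ 0} |a_D(s)| = O(3^{ω(D)} q^{3ℓ−3k−3c}), with implied constants depending only on q. -/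
/-!
Statement 13. Estimates for the root-counting sums over the `σ`-reducible
binary cubic forms on a Hirzebruch surface `F_k` over `F_q`.

We model the Hirzebruch surface `F_k = P(O ⊕ O(−k)) → P¹` over `F_q` concretely:
* closed points of `P¹` are the point at infinity together with monic irreducible
  polynomials over `F_q`;
* global sections of `O(m, ℓ)` on `F_k` are tuples `(A₀, …, A_m)` of binary forms
  `A_i ∈ F_q[t₀, t₁]` homogeneous of degree `ℓ − i·k`, corresponding to
  `A₀ x^m + A₁ x^{m−1} y + ⋯ + A_m y^m`;
* for a closed point `P` of `P¹`, `r_P(s)` is the number of relative degree one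
  points of the fiber over `P` (that is, points of `P¹(κ(P))`) at which `s` vanishes,
  and `r_D(s) = ∏_{P ∣ D} r_P(s)`, `a_D(s) = ∏_{P ∣ D} (r_P(s) − 1)`.
-/

open scoped Classical

noncomputable section

namespace Stmt13

/-- Closed points of the projective line `P¹` over `F_q`: `none` is the point at
infinity, and `some p` corresponds to the monic irreducible polynomial `p`. -/
abbrev P1Pt (Fq : Type) [Field Fq] : Type :=
  Option {p : Polynomial Fq // p.Monic ∧ Irreducible p}

variable {Fq : Type} [Field Fq]

/-- The degree of a closed point of `P¹`. -/
def P1Pt.deg : P1Pt Fq → ℕ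
  | none => 1
  | some p => p.1.natDegree

/-- The residue field of a closed point of `P¹`. -/
def P1Pt.Res : P1Pt Fq → Type
  | none => Fq
  | some p => AdjoinRoot p.1

instance (P : P1Pt Fq) : CommRing (P1Pt.Res P) :=
  match P with
  | none => inferInstanceAs (CommRing Fq)
  | some p => inferInstanceAs (CommRing (AdjoinRoot p.1))

instance (P : P1Pt Fq) : Algebra Fq (P1Pt.Res P) :=
  match P with
  | none => Algebra.id Fq
  | some p => inferInstanceAs (Algebra Fq (AdjoinRoot p.1))

/-- The homogeneous coordinates `(t₀ : t₁)` of a closed point of `P¹`, in its residue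
field: `(1 : 0)` for the point at infinity, and `(θ : 1)` with `θ` the root of `p`
for the point `some p`. -/
def P1Pt.coords : (P : P1Pt Fq) → Fin 2 → P1Pt.Res P
  | none => ![1, 0]
  | some p => ![AdjoinRoot.root p.1, 1]

/-- Evaluate a polynomial in the homogeneous coordinates `t₀, t₁` of the base `P¹`
at a closed point `P`, in the residue field of `P`. -/
def resEval (P : P1Pt Fq) (A : MvPolynomial (Fin 2) Fq) : P1Pt.Res P :=
  MvPolynomial.aeval (P1Pt.coords P) A

/-- `r_P(s)`: the number of relative degree one points of the fiber of `F_k → P¹`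
over `P` at which the binary cubic form `s = (A₀, A₁, A₂, A₃)` vanishes.  These
points are the `(z : 1)` with `z` in the residue field of `P`, together with `(1 : 0)`. -/
def rP (P : P1Pt Fq) (s : Fin 4 → MvPolynomial (Fin 2) Fq) : ℕ :=
  Nat.card {z : P1Pt.Res P //
      resEval P (s 0) * z ^ 3 + resEval P (s 1) * z ^ 2
        + resEval P (s 2) * z + resEval P (s 3) = 0} +
    (if resEval P (s 0) = 0 then 1 else 0)

/-- The degree of a reduced effective divisor (a finite set of closed points) on `P¹`. -/
def degD (D : Finset (P1Pt Fq)) : ℕ := ∑ P ∈ D, P1Pt.deg P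

/-- `r_D(s) = ∏_{P ∣ D} r_P(s)`. -/
def rD (D : Finset (P1Pt Fq)) (s : Fin 4 → MvPolynomial (Fin 2) Fq) : ℕ :=
  ∏ P ∈ D, rP P s

/-- `a_D(s) = ∏_{P ∣ D} (r_P(s) − 1)`. -/
def aD (D : Finset (P1Pt Fq)) (s : Fin 4 → MvPolynomial (Fin 2) Fq) : ℤ :=
  ∏ P ∈ D, ((rP P s : ℤ) - 1)

/-- `p` is homogeneous of (possibly negative) degree `d`; for `d < 0` this forces
`p = 0`. -/
def IsHomOfDeg (p : MvPolynomial (Fin 2) Fq) (d : ℤ) : Prop :=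
  p.IsHomogeneous d.toNat ∧ (d < 0 → p = 0)

/-- The space of global sections of `O(m, ℓ)` on the Hirzebruch surface `F_k`,
viewed as tuples `(A₀, …, A_m)` of binary forms with `A_i` homogeneous of degree
`ℓ − i·k`. -/
def SecSet (m ℓ k : ℕ) : Set (Fin (m + 1) → MvPolynomial (Fin 2) Fq) :=
  {s | ∀ i : Fin (m + 1), IsHomOfDeg (s i) ((ℓ : ℤ) - (i : ℕ) * k)}

open Polynomial in
/-- dehomogenization -/
def deh (A : MvPolynomial (Fin 2) Fq) : Fq[X] := MvPolynomial.aeval ![X, 1] A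

theorem deh_hom {A : MvPolynomial (Fin 2) Fq} {n : ℕ} (h : A.IsHomogeneous n) :
    (deh A).homogenize n = A :=
  Polynomial.homogenize_eq_of_isHomogeneous h rfl

theorem deh_natDegree {A : MvPolynomial (Fin 2) Fq} {n : ℕ} (h : A.IsHomogeneous n) :
    (deh A).natDegree ≤ n := by
  unfold deh
  rw [A.as_sum, map_sum]
  refine Polynomial.natDegree_sum_le_of_forall_le _ _ fun m hm => ?_
  obtain rfl : m.weight 1 = n := h <| by simpa using hm
  rw [MvPolynomial.aeval_monomial, ← Polynomial.C_eq_algebraMap]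
  refine (Polynomial.natDegree_C_mul_le _ _).trans ?_
  simp [Finsupp.prod_fintype, Finsupp.weight_apply, Finsupp.sum_fintype, Fin.prod_univ_two,
    Fin.sum_univ_two]

theorem resEval_none {A : MvPolynomial (Fin 2) Fq} {n : ℕ} (h : A.IsHomogeneous n) :
    resEval none A = (deh A).coeff n := by
  have key : ∀ (f : Polynomial Fq), MvPolynomial.aeval (![1, 0] : Fin 2 → Fq)
      (f.homogenize n) = f.coeff n := by
    intro f
    unfold Polynomial.homogenize
    rw [map_sum, Finset.sum_eq_single (n, 0)]
    · simp [MvPolynomial.aeval_monomial, Finsupp.prod_fintype, Fin.prod_univ_two]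
    · rintro ⟨a, b⟩ hab hne
      have hb : b ≠ 0 := by
        rintro rfl
        simp at hab
        simp [hab] at hne
      simp [MvPolynomial.aeval_monomial, Finsupp.prod_fintype, Fin.prod_univ_two, hb]
    · simp
  have := key (deh A)
  rw [deh_hom h] at this
  exact this

theorem resEval_some (p : {p : Polynomial Fq // p.Monic ∧ Irreducible p})
    (A : MvPolynomial (Fin 2) Fq) :
    resEval (some p) A = AdjoinRoot.mk p.1 (deh A) := by
  have : (AdjoinRoot.mkₐ p.1).comp (MvPolynomial.aeval ![Polynomial.X, 1])
    = (MvPolynomial.aeval (![AdjoinRoot.root p.1, 1]) :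
        MvPolynomial (Fin 2) Fq →ₐ[Fq] AdjoinRoot p.1) := by
    ext i
    rw [AlgHom.comp_apply, MvPolynomial.aeval_X, MvPolynomial.aeval_X]
    fin_cases i
    · rfl
    · exact map_one (AdjoinRoot.mkₐ p.1)
  exact (DFunLike.congr_fun this A).symm

theorem resEval_some_eq_zero (p : {p : Polynomial Fq // p.Monic ∧ Irreducible p})
    (A : MvPolynomial (Fin 2) Fq) :
    resEval (some p) A = 0 ↔ p.1 ∣ deh A := by
  rw [resEval_some]
  exact AdjoinRoot.mk_eq_zero

/-- form cutting out the point -/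
def ptForm : P1Pt Fq → MvPolynomial (Fin 2) Fq
  | none => MvPolynomial.X 1
  | some p => p.1.homogenize p.1.natDegree

theorem ptForm_not_unit (P : P1Pt Fq) : ¬ IsUnit (ptForm P) := by
  cases P with
  | none =>
    intro h
    have := h.map (MvPolynomial.aeval (0 : Fin 2 → Fq))
    simp [ptForm] at this
  | some p =>
    intro h
    have := h.map (MvPolynomial.aeval (![Polynomial.X, 1] : Fin 2 → Polynomial Fq))
    rw [ptForm, Polynomial.aeval_homogenize_X_one _ le_rfl] at this
    exact p.2.2.not_isUnit this

theorem ptForm_dvd (P : P1Pt Fq) {A : MvPolynomial (Fin 2) Fq} {n : ℕ} (h : A.IsHomogeneous n)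
    (h0 : resEval P A = 0) : ptForm P ∣ A := by
  have hd := deh_natDegree h
  have hh := deh_hom h
  by_cases hz : deh A = 0
  · rw [hz] at hh
    simp at hh
    rw [← hh]; exact dvd_zero _
  cases P with
  | none =>
    rw [resEval_none h] at h0
    change (deh A).coeff n = 0 at h0
    have hlt : (deh A).natDegree ≠ n := by
      rintro rfl
      exact hz (by simpa using h0)
    obtain ⟨m, rfl⟩ : ∃ m, n = 1 + m := ⟨n - 1, by omega⟩
    have := Polynomial.homogenize_mul (1 : Polynomial Fq) (deh A) (m := 1) (n := m)
      (by simp) (by omega)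
    rw [one_mul, hh] at this
    rw [this]
    simp [ptForm]
  | some p =>
    rw [resEval_some_eq_zero] at h0
    obtain ⟨g, hg⟩ := h0
    have hg0 : g ≠ 0 := by rintro rfl; simp [hg] at hz
    have hdeg : (deh A).natDegree = p.1.natDegree + g.natDegree := by
      rw [hg, Polynomial.natDegree_mul p.2.2.ne_zero hg0]
    have := Polynomial.homogenize_mul p.1 g (m := p.1.natDegree) (n := n - p.1.natDegree)
      le_rfl (by omega)
    rw [← hg, Nat.add_sub_cancel' (by omega), hh] at this
    rw [this]
    exact dvd_mul_right _ _

/-- forms of degree `n` vanishing on `D` -/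
def vanSet (n : ℕ) (D : Finset (P1Pt Fq)) : Set (MvPolynomial (Fin 2) Fq) :=
  {A | A.IsHomogeneous n ∧ ∀ P ∈ D, resEval P A = 0}

theorem degD_eq (D : Finset (P1Pt Fq)) :
    degD D = (if none ∈ D then 1 else 0) + (∏ p ∈ D.eraseNone, p.1).natDegree := by
  rw [Polynomial.natDegree_prod_of_monic _ _ (fun p _ => p.2.1)]
  unfold degD
  have key : ∑ p ∈ D.eraseNone, p.1.natDegree = ∑ P ∈ D.erase none, P1Pt.deg P := by
    rw [← Finset.map_some_eraseNone, Finset.sum_map]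
    rfl
  rw [key]
  by_cases h : none ∈ D
  · rw [if_pos h, ← Finset.add_sum_erase D _ h]
    rfl
  · rw [if_neg h, Finset.erase_eq_of_notMem h, zero_add]

theorem van_dvd {n : ℕ} {D : Finset (P1Pt Fq)} {A : MvPolynomial (Fin 2) Fq}
    (hA : A ∈ vanSet n D) : (∏ p ∈ D.eraseNone, p.1) ∣ deh A := by
  refine Finset.prod_dvd_of_coprime ?_ ?_
  · intro p _ r _ hpr
    refine (Irreducible.coprime_iff_not_dvd p.2.2).2 fun hdvd => hpr ?_
    apply Subtype.ext
    exact Polynomial.eq_of_monic_of_associated p.2.1 r.2.1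
      (p.2.2.associated_of_dvd r.2.2 hdvd)
  · intro p hp
    rw [Finset.mem_eraseNone] at hp
    exact (resEval_some_eq_zero p A).1 (hA.2 _ hp)

theorem van_degree {n : ℕ} {D : Finset (P1Pt Fq)} {A : MvPolynomial (Fin 2) Fq}
    (hA : A ∈ vanSet n D) (h0 : deh A ≠ 0) :
    (deh A).natDegree + (if none ∈ D then 1 else 0) ≤ n := by
  have := deh_natDegree hA.1
  split_ifs with h
  · have h2 := hA.2 _ h
    rw [resEval_none hA.1] at h2
    change (deh A).coeff n = 0 at h2
    have : (deh A).natDegree ≠ n := by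
      rintro rfl
      exact h0 (by simpa using h2)
    omega
  · omega

theorem van_card [Fintype Fq] (n : ℕ) (D : Finset (P1Pt Fq)) :
    (vanSet n D).Finite ∧ (vanSet n D).ncard ≤ Fintype.card Fq ^ (n + 1 - degD D) := by
  let G : Polynomial Fq := ∏ p ∈ D.eraseNone, p.1
  have hG : G.Monic := Polynomial.monic_prod_of_monic _ _ (fun p _ => p.2.1)
  let φ : vanSet n D → (Fin (n + 1 - degD D) → Fq) := fun A i => (deh A.1 /ₘ G).coeff i
  have hφ : Function.Injective φ := by
    intro A B hAB
    have hq : deh A.1 /ₘ G = deh B.1 /ₘ G := by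
      have hdeg : ∀ A ∈ vanSet n D, ∀ i, n + 1 - degD D ≤ i → (deh A /ₘ G).coeff i = 0 := by
        intro A hA i hi
        by_cases hz : deh A = 0
        · simp [hz]
        obtain ⟨g, hg⟩ := van_dvd hA
        change deh A = G * g at hg
        have h1 := van_degree hA hz
        have hg0 : g ≠ 0 := by rintro rfl; simp [hg] at hz
        rw [hg, Polynomial.natDegree_mul hG.ne_zero hg0] at h1
        have h2 := degD_eq D
        change _ = _ + G.natDegree at h2
        rw [hg, Polynomial.mul_divByMonic_cancel_left _ hG]
        exact Polynomial.coeff_eq_zero_of_natDegree_lt (by omega)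
      ext i
      by_cases hi : i < n + 1 - degD D
      · exact congrFun hAB ⟨i, hi⟩
      · rw [hdeg _ A.2 _ (by omega), hdeg _ B.2 _ (by omega)]
    have hd : ∀ A ∈ vanSet n D, deh A = G * (deh A /ₘ G) := by
      intro A hA
      obtain ⟨g, hg⟩ := van_dvd hA
      change deh A = G * g at hg
      rw [hg, Polynomial.mul_divByMonic_cancel_left _ hG]
    apply Subtype.ext
    rw [← deh_hom A.2.1, ← deh_hom B.2.1, hd _ A.2, hd _ B.2, hq]
  have hfin : Finite (vanSet n D) := Finite.of_injective φ hφ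
  refine ⟨hfin, ?_⟩
  have := Nat.card_le_card_of_injective φ hφ
  simpa using this

instance resDomain (P : P1Pt Fq) : IsDomain (P1Pt.Res P) :=
  match P with
  | none => inferInstanceAs (IsDomain Fq)
  | some p =>
    haveI : Fact (Irreducible p.1) := ⟨p.2.2⟩
    inferInstanceAs (IsDomain (AdjoinRoot p.1))

theorem res_card [Fintype Fq] (P : P1Pt Fq) :
    Nat.card (P1Pt.Res P) = Fintype.card Fq ^ P1Pt.deg P := by
  cases P with
  | none => 
    change Nat.card Fq = Fintype.card Fq ^ 1
    simp
  | some p =>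
    change Nat.card (AdjoinRoot p.1) = Fintype.card Fq ^ p.1.natDegree
    rw [Nat.card_congr (AdjoinRoot.powerBasis' p.2.1).basis.equivFun.toEquiv]
    simp

theorem root_count {R : Type} [CommRing R] [IsDomain R] (a b c d : R)
    (h : ¬ (a = 0 ∧ b = 0 ∧ c = 0 ∧ d = 0)) :
    Nat.card {z : R // a * z ^ 3 + b * z ^ 2 + c * z + d = 0} + (if a = 0 then 1 else 0) ≤ 3 := by
  let p : Polynomial R := Polynomial.C a * Polynomial.X ^ 3 + Polynomial.C b * Polynomial.X ^ 2
    + Polynomial.C c * Polynomial.X + Polynomial.C d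
  have hp : p ≠ 0 := by
    intro hp
    have h0 := congrArg (fun p => Polynomial.coeff p 0) hp
    have h1 := congrArg (fun p => Polynomial.coeff p 1) hp
    have h2 := congrArg (fun p => Polynomial.coeff p 2) hp
    have h3 := congrArg (fun p => Polynomial.coeff p 3) hp
    simp [p, Polynomial.coeff_X, Polynomial.coeff_C, Polynomial.coeff_X_pow] at h0 h1 h2 h3
    exact h ⟨h3, h2, h1, h0⟩
  have hc : Nat.card {z : R // a * z ^ 3 + b * z ^ 2 + c * z + d = 0} ≤ p.natDegree := by
    have e : {z : R | a * z ^ 3 + b * z ^ 2 + c * z + d = 0} = (p.roots.toFinset : Set R) := by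
      ext z
      simp [hp, p]
    change Set.ncard {z : R | a * z ^ 3 + b * z ^ 2 + c * z + d = 0} ≤ _
    rw [e, Set.ncard_coe_finset]
    exact (Multiset.toFinset_card_le _).trans (Polynomial.card_roots' p)
  split_ifs with ha
  · have : p.natDegree ≤ 2 := by
      simp only [p, ha]
      simpa using Polynomial.natDegree_quadratic_le (a := b) (b := c) (c := d)
    omega
  · have : p.natDegree ≤ 3 := Polynomial.natDegree_cubic_le
    omega

theorem rP_le (P : P1Pt Fq) (s : Fin 4 → MvPolynomial (Fin 2) Fq)
    (h : ¬ (resEval P (s 0) = 0 ∧ resEval P (s 1) = 0 ∧ resEval P (s 2) = 0 ∧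
      resEval P (s 3) = 0)) : rP P s ≤ 3 := by
  unfold rP
  exact root_count _ _ _ _ h

theorem rP_eq [Fintype Fq] (P : P1Pt Fq) (s : Fin 4 → MvPolynomial (Fin 2) Fq)
    (h : resEval P (s 0) = 0 ∧ resEval P (s 1) = 0 ∧ resEval P (s 2) = 0 ∧
      resEval P (s 3) = 0) : rP P s = Fintype.card Fq ^ P1Pt.deg P + 1 := by
  unfold rP
  obtain ⟨h0, h1, h2, h3⟩ := h
  rw [← res_card, if_pos h0]
  congr 1
  rw [h0, h1, h2, h3]
  exact Nat.card_congr (Equiv.subtypeUnivEquiv (by intro z; ring))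

/-- product of a linear and a quadratic form -/
def mulSec (σ : Fin 2 → MvPolynomial (Fin 2) Fq) (B : Fin 3 → MvPolynomial (Fin 2) Fq) :
    Fin 4 → MvPolynomial (Fin 2) Fq :=
  ![B 0 * σ 0, B 0 * σ 1 + B 1 * σ 0, B 1 * σ 1 + B 2 * σ 0, B 2 * σ 1]

theorem van_of_mul (P : P1Pt Fq) (σ : Fin 2 → MvPolynomial (Fin 2) Fq)
    (B : Fin 3 → MvPolynomial (Fin 2) Fq)
    (hσ : ¬ (resEval P (σ 0) = 0 ∧ resEval P (σ 1) = 0))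
    (h : resEval P (mulSec σ B 0) = 0 ∧ resEval P (mulSec σ B 1) = 0 ∧
      resEval P (mulSec σ B 2) = 0 ∧ resEval P (mulSec σ B 3) = 0) :
    ∀ i, resEval P (B i) = 0 := by
  obtain ⟨h0, h1, h2, h3⟩ := h
  simp only [mulSec, resEval, Matrix.cons_val, map_add, map_mul] at h0 h1 h2 h3 hσ ⊢
  generalize (MvPolynomial.aeval P.coords) (σ 0) = u at *
  generalize (MvPolynomial.aeval P.coords) (σ 1) = v at *
  rw [Fin.forall_fin_succ, Fin.forall_fin_two]
  change (MvPolynomial.aeval P.coords) (B 0) = 0 ∧ (MvPolynomial.aeval P.coords) (B 1) = 0 ∧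
    (MvPolynomial.aeval P.coords) (B 2) = 0
  generalize (MvPolynomial.aeval P.coords) (B 0) = x at *
  generalize (MvPolynomial.aeval P.coords) (B 1) = y at *
  generalize (MvPolynomial.aeval P.coords) (B 2) = z at *
  by_cases hu : u = 0
  · have hv : v ≠ 0 := fun hv => hσ ⟨hu, hv⟩
    subst hu
    simp_all
  · have hx : x = 0 := by simpa [hu] using h0
    subst hx
    have hy : y = 0 := by simpa [hu] using h1
    subst hy
    have hz : z = 0 := by simpa [hu] using h2
    exact ⟨rfl, rfl, hz⟩

theorem sec_hom {B : Fin 3 → MvPolynomial (Fin 2) Fq} {m k : ℕ} (hm : 2 * k ≤ m)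
    (hB : B ∈ SecSet 2 m k) (i : Fin 3) : (B i).IsHomogeneous (m - i * k) := by
  have h := (hB i).1
  have e : ((m : ℤ) - (i : ℕ) * k).toNat = m - i * k := by
    have : ((i : ℕ) : ℤ) * k = ((i * k : ℕ) : ℤ) := by push_cast; rfl
    rw [this]; omega
  rwa [e] at h

/-- sections of `O(2,m)` vanishing on the fibers over `D` -/
def secVan (m k : ℕ) (D : Finset (P1Pt Fq)) : Set (Fin 3 → MvPolynomial (Fin 2) Fq) :=
  {B | B ≠ 0 ∧ B ∈ SecSet 2 m k ∧ ∀ P ∈ D, ∀ i, resEval P (B i) = 0}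

theorem secVan_card [Fintype Fq] (m k : ℕ) (hm : 2 * k ≤ m) (D : Finset (P1Pt Fq)) :
    (secVan m k D).Finite ∧ (secVan m k D).ncard * Fintype.card Fq ^ degD D ≤
      Fintype.card Fq ^ (3 * m - 3 * k + 3) := by
  have hq : 0 < Fintype.card Fq := Fintype.card_pos
  have hsub : secVan m k D ⊆ Set.univ.pi (fun i : Fin 3 => vanSet (m - i * k) D) := by
    intro B hB i _
    exact ⟨sec_hom hm hB.2.1 i, fun P hP => hB.2.2 P hP i⟩
  have hfin : (Set.univ.pi (fun i : Fin 3 => vanSet (Fq := Fq) (m - i * k) D)).Finite :=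
    Set.Finite.pi fun i => (van_card (m - (i : ℕ) * k) D).1
  refine ⟨hfin.subset hsub, ?_⟩
  rcases (secVan m k D).eq_empty_or_nonempty with he | ⟨B, hB⟩
  · simp [he]
  have hd : degD D ≤ m := by
    by_contra hd
    apply hB.1
    funext i
    have h1 := (van_card (m - i * k) D).2
    have h2 : m - i * k + 1 - degD D = 0 := by omega
    rw [h2, pow_zero] at h1
    refine (Set.ncard_le_one (van_card (m - i * k) D).1).1 h1 _ (hsub hB i trivial) _ ?_
    refine ⟨MvPolynomial.isHomogeneous_zero _ _ _, ?_⟩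
    intro P _
    simp [resEval]
  have hle : (secVan m k D).ncard ≤ ∏ i : Fin 3, Fintype.card Fq ^ (m - i * k + 1 - degD D) := by
    refine (Set.ncard_le_ncard hsub hfin).trans ?_
    have : (Set.univ.pi (fun i : Fin 3 => vanSet (Fq := Fq) (m - i * k) D)).ncard =
        ∏ i : Fin 3, (vanSet (Fq := Fq) (m - i * k) D).ncard := by
      rw [← Nat.card_coe_set_eq, Nat.card_congr (Equiv.Set.univPi _), Nat.card_pi]
      rfl
    rw [this]
    exact Finset.prod_le_prod' fun i _ => (van_card (m - i * k) D).2
  refine (Nat.mul_le_mul_right _ hle).trans ?_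
  rw [Finset.prod_pow_eq_pow_sum, ← pow_add]
  refine Nat.pow_le_pow_right hq ?_
  rw [Fin.sum_univ_three]
  simp only [Fin.val_zero, Fin.val_one, Fin.val_two]
  omega

theorem main_sum [Fintype Fq] (m k : ℕ) (hm : 2 * k ≤ m) (D : Finset (P1Pt Fq)) (a b : ℕ)
    (g : P1Pt Fq → (Fin 3 → MvPolynomial (Fin 2) Fq) → ℕ)
    (hg : ∀ P B, g P B ≤ (if ∀ i, resEval P (B i) = 0 then b * Fintype.card Fq ^ P.deg else 0) + a) :
    ∑ B ∈ (secVan_card (Fq := Fq) m k hm ∅).1.toFinset, ∏ P ∈ D, g P B ≤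
      (b + a) ^ D.card * Fintype.card Fq ^ (3 * m - 3 * k + 3) := by
  calc _ ≤ ∑ B ∈ (secVan_card (Fq := Fq) m k hm ∅).1.toFinset, ∏ P ∈ D,
        ((if ∀ i, resEval P (B i) = 0 then b * Fintype.card Fq ^ P.deg else 0) + a) :=
        Finset.sum_le_sum fun B _ => Finset.prod_le_prod' fun P _ => hg P B
    _ = ∑ t ∈ D.powerset, ∑ B ∈ (secVan_card (Fq := Fq) m k hm ∅).1.toFinset, 
        (∏ P ∈ t, (if ∀ i, resEval P (B i) = 0 then b * Fintype.card Fq ^ P.deg else 0)) * 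
          ∏ P ∈ D \ t, a := by
        rw [Finset.sum_comm]
        refine Finset.sum_congr rfl fun B _ => ?_
        rw [Finset.prod_add]
    _ ≤ ∑ t ∈ D.powerset, ((∏ P ∈ t, b) * ∏ P ∈ D \ t, a) *
          Fintype.card Fq ^ (3 * m - 3 * k + 3) := by
        refine Finset.sum_le_sum fun t _ => ?_
        have h1 : ∀ B ∈ (secVan_card (Fq := Fq) m k hm ∅).1.toFinset,
            (∏ P ∈ t, (if ∀ i, resEval P (B i) = 0 then b * Fintype.card Fq ^ P.deg else 0)) * 
              ∏ P ∈ D \ t, a = if B ∈ secVan m k t then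
              ((∏ P ∈ t, b) * ∏ P ∈ D \ t, a) * Fintype.card Fq ^ degD t else 0 := by
          intro B hB
          rw [Set.Finite.mem_toFinset] at hB
          split_ifs with h
          · have : (∏ P ∈ t, (if ∀ i, resEval P (B i) = 0 then b * Fintype.card Fq ^ P.deg else 0))
                = ∏ P ∈ t, (b * Fintype.card Fq ^ P.deg) :=
              Finset.prod_congr rfl fun P hP => if_pos (h.2.2 P hP)
            rw [this, Finset.prod_mul_distrib, Finset.prod_pow_eq_pow_sum]
            unfold degD
            ring
          · have : ∃ P ∈ t, ¬ ∀ i, resEval P (B i) = 0 := by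
              by_contra hc
              push Not at hc
              exact h ⟨hB.1, hB.2.1, hc⟩
            obtain ⟨P, hP, hP2⟩ := this
            rw [Finset.prod_eq_zero hP (if_neg hP2), zero_mul]
        rw [Finset.sum_congr rfl h1, ← Finset.sum_filter, Finset.sum_const, smul_eq_mul]
        have h2 : ((secVan_card (Fq := Fq) m k hm ∅).1.toFinset.filter
            (fun B => B ∈ secVan m k t)).card ≤ (secVan m k t).ncard := by
          rw [← Set.ncard_coe_finset]
          refine Set.ncard_le_ncard ?_ (secVan_card m k hm t).1
          intro B hB
          simp at hB
          exact hB.2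
        calc _ ≤ (secVan m k t).ncard * 
              (((∏ P ∈ t, b) * ∏ P ∈ D \ t, a) * Fintype.card Fq ^ degD t) :=
              Nat.mul_le_mul_right _ h2
          _ = ((∏ P ∈ t, b) * ∏ P ∈ D \ t, a) * 
              ((secVan m k t).ncard * Fintype.card Fq ^ degD t) := by ring
          _ ≤ _ := Nat.mul_le_mul_left _ (secVan_card m k hm t).2
    _ = _ := by
        rw [← Finset.sum_mul, ← Finset.prod_add, Finset.prod_const]

theorem finsum_le [Fintype Fq] (m k : ℕ) (hm : 2 * k ≤ m) (σ : Fin 2 → MvPolynomial (Fin 2) Fq)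
    (f : (Fin 4 → MvPolynomial (Fin 2) Fq) → ℕ) :
    (∑ᶠ s ∈ {s : Fin 4 → MvPolynomial (Fin 2) Fq | s ≠ 0 ∧
              ∃ B ∈ SecSet 2 m k,
                s 0 = B 0 * σ 0 ∧ s 1 = B 0 * σ 1 + B 1 * σ 0 ∧
                s 2 = B 1 * σ 1 + B 2 * σ 0 ∧ s 3 = B 2 * σ 1}, f s) ≤
      ∑ B ∈ (secVan_card (Fq := Fq) m k hm ∅).1.toFinset, f (mulSec σ B) := by
  set S := {s : Fin 4 → MvPolynomial (Fin 2) Fq | s ≠ 0 ∧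
              ∃ B ∈ SecSet 2 m k,
                s 0 = B 0 * σ 0 ∧ s 1 = B 0 * σ 1 + B 1 * σ 0 ∧
                s 2 = B 1 * σ 1 + B 2 * σ 0 ∧ s 3 = B 2 * σ 1} with hS
  set T := (secVan_card (Fq := Fq) m k hm ∅).1.toFinset with hT
  have hsub : S ⊆ ((T.image (mulSec σ) : Finset _) : Set (Fin 4 → MvPolynomial (Fin 2) Fq)) := by
    rintro s ⟨hs, B, hB, h0, h1, h2, h3⟩
    have e : mulSec σ B = s := by
      funext i
      fin_cases i <;> simp [mulSec, h0, h1, h2, h3]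
    rw [Finset.coe_image]
    refine ⟨B, ?_, e⟩
    simp only [hT, Set.Finite.coe_toFinset]
    refine ⟨?_, hB, by simp⟩
    rintro rfl
    apply hs
    rw [← e]
    funext i
    fin_cases i <;> simp [mulSec]
  have hfin : S.Finite := (Finset.finite_toSet _).subset hsub
  rw [finsum_mem_eq_finite_toFinset_sum _ hfin]
  calc _ ≤ ∑ s ∈ T.image (mulSec σ), f s := by
        refine Finset.sum_le_sum_of_subset ?_
        intro s hs
        exact hsub (by simpa using hs)
    _ ≤ _ := Finset.sum_image_le_of_nonneg (by simp)

/-- Let `ℓ, k, c ≥ 0` with `ℓ − 3k ≥ 0` and `ℓ − 2k ≥ c`, and let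
`σ ∈ H⁰(F_k, O(1,c))` be a nonzero irreducible section.  Let `Img(σ)` be the image of
multiplication by `σ : H⁰(F_k, O(2, ℓ−c)) → H⁰(F_k, O(3, ℓ))`.  Then for every
reduced effective divisor `D` on `P¹`,
`Σ_{s ∈ Img(σ), s ≠ 0} r_D(s) = O(5^{ω(D)} q^{3ℓ−3k−3c})` and
`Σ_{s ∈ Img(σ), s ≠ 0} |a_D(s)| = O(3^{ω(D)} q^{3ℓ−3k−3c})`,
with implied constants depending only on `q`. -/
theorem statement_13 (Fq : Type) [Field Fq] [Fintype Fq] :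
    ∃ K : ℕ, 0 < K ∧
      ∀ (ℓ k c : ℕ) (σ : Fin 2 → MvPolynomial (Fin 2) Fq) (D : Finset (P1Pt Fq)),
        3 * k ≤ ℓ → c + 2 * k ≤ ℓ →
        σ ≠ 0 →
        IsHomOfDeg (σ 0) (c : ℤ) →
        IsHomOfDeg (σ 1) ((c : ℤ) - (k : ℤ)) →
        (∀ d : MvPolynomial (Fin 2) Fq, d ∣ σ 0 → d ∣ σ 1 → IsUnit d) →
        (∑ᶠ s ∈ {s : Fin 4 → MvPolynomial (Fin 2) Fq | s ≠ 0 ∧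
              ∃ B ∈ SecSet 2 (ℓ - c) k,
                s 0 = B 0 * σ 0 ∧ s 1 = B 0 * σ 1 + B 1 * σ 0 ∧
                s 2 = B 1 * σ 1 + B 2 * σ 0 ∧ s 3 = B 2 * σ 1},
            rD D s) ≤
          K * 5 ^ D.card * Fintype.card Fq ^ (3 * ℓ - 3 * k - 3 * c) ∧
        (∑ᶠ s ∈ {s : Fin 4 → MvPolynomial (Fin 2) Fq | s ≠ 0 ∧
              ∃ B ∈ SecSet 2 (ℓ - c) k,
                s 0 = B 0 * σ 0 ∧ s 1 = B 0 * σ 1 + B 1 * σ 0 ∧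
                s 2 = B 1 * σ 1 + B 2 * σ 0 ∧ s 3 = B 2 * σ 1},
            (aD D s).natAbs) ≤
          K * 3 ^ D.card * Fintype.card Fq ^ (3 * ℓ - 3 * k - 3 * c) := by
  have hq : 0 < Fintype.card Fq := Fintype.card_pos
  refine ⟨Fintype.card Fq ^ 3, pow_pos hq 3, ?_⟩
  intro ℓ k c σ D h3 h2 _ hσ0 hσ1 hirr
  have hm : 2 * k ≤ ℓ - c := by omega
  have hnv : ∀ P : P1Pt Fq, ¬ (resEval P (σ 0) = 0 ∧ resEval P (σ 1) = 0) := fun P hP =>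
    ptForm_not_unit P (hirr _ (ptForm_dvd P hσ0.1 hP.1) (ptForm_dvd P hσ1.1 hP.2))
  have he : 3 * (ℓ - c) - 3 * k + 3 = 3 + (3 * ℓ - 3 * k - 3 * c) := by omega
  have hqd : ∀ P : P1Pt Fq, 1 ≤ Fintype.card Fq ^ P.deg := fun P => Nat.pow_pos hq
  constructor
  · refine (finsum_le (ℓ - c) k hm σ (rD D)).trans ?_
    refine (main_sum (ℓ - c) k hm D 3 2 (fun P B => rP P (mulSec σ B)) ?_).trans ?_
    · intro P B
      by_cases h : resEval P (mulSec σ B 0) = 0 ∧ resEval P (mulSec σ B 1) = 0 ∧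
          resEval P (mulSec σ B 2) = 0 ∧ resEval P (mulSec σ B 3) = 0
      · rw [if_pos (van_of_mul P σ B (hnv P) h)]
        have := rP_eq P _ h
        have := hqd P
        omega
      · have := rP_le P _ h
        omega
    · rw [he, pow_add]
      apply le_of_eq
      ring
  · refine (finsum_le (ℓ - c) k hm σ (fun s => (aD D s).natAbs)).trans ?_
    have e : ∀ B, (aD D (mulSec σ B)).natAbs
        = ∏ P ∈ D, ((rP P (mulSec σ B) : ℤ) - 1).natAbs := by
      intro B
      unfold aD
      exact map_prod Int.natAbsHom _ _
    simp only [e]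
    refine (main_sum (ℓ - c) k hm D 2 1 (fun P B => ((rP P (mulSec σ B) : ℤ) - 1).natAbs) ?_).trans ?_
    · intro P B
      by_cases h : resEval P (mulSec σ B 0) = 0 ∧ resEval P (mulSec σ B 1) = 0 ∧
          resEval P (mulSec σ B 2) = 0 ∧ resEval P (mulSec σ B 3) = 0
      · rw [if_pos (van_of_mul P σ B (hnv P) h)]
        have := rP_eq P _ h
        omega
      · have := rP_le P _ h
        omega
    · rw [he, pow_add]
      apply le_of_eq
      ring

end Stmt13
end
end

section
/- Let ℓ, k ≥ 0 be integers with ℓ ≥ 3k, and let D be a reduced effective divisor on P¹. Then R^{hr}(ℓ,k,D) = O(5^{ω(D)} q^{3ℓ−3k}), R^{sr}(ℓ,k,D) = O(5^{ω(D)} q^{3ℓ−5k}), R^{z}(ℓ,k,D) = O(2^{ω(D)} q^{deg D}), and similarly |Φ^{hr}(ℓ,k,D)| = O(3^{ω(D)} q^{3ℓ−3k}), |Φ^{sr}(ℓ,k,D)| = O(3^{ω(D)} q^{3ℓ−5k}), and |Φ^{z}(ℓ,k,D)| = O(q^{deg D}), with implied constants depending only on q. -/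
/-!
Statement 14.  Bounds for the root-counting sums `R^{hr}, R^{sr}, R^{z}` and the
adjusted sums `Φ^{hr}, Φ^{sr}, Φ^{z}` over horizontally reducible, specially
reducible, and zero binary cubic forms on the Hirzebruch surface `F_k` over `F_q`.
See the preamble for the concrete model of `F_k` and the root-counting functions.
-/
open scoped Classical

noncomputable section

namespace Stmt14

/-- Closed points of the projective line `P¹` over `F_q`: `none` is the point at
infinity, and `some p` corresponds to the monic irreducible polynomial `p`. -/
abbrev P1Pt (Fq : Type) [Field Fq] : Type :=
  Option {p : Polynomial Fq // p.Monic ∧ Irreducible p}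

variable {Fq : Type} [Field Fq]

/-- The degree of a closed point of `P¹`. -/
def P1Pt.deg : P1Pt Fq → ℕ
  | none => 1
  | some p => p.1.natDegree

/-- The residue field of a closed point of `P¹`. -/
def P1Pt.Res : P1Pt Fq → Type
  | none => Fq
  | some p => AdjoinRoot p.1

instance (P : P1Pt Fq) : CommRing (P1Pt.Res P) :=
  match P with
  | none => inferInstanceAs (CommRing Fq)
  | some p => inferInstanceAs (CommRing (AdjoinRoot p.1))

instance (P : P1Pt Fq) : Algebra Fq (P1Pt.Res P) :=
  match P with
  | none => Algebra.id Fq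
  | some p => inferInstanceAs (Algebra Fq (AdjoinRoot p.1))

/-- The homogeneous coordinates `(t₀ : t₁)` of a closed point of `P¹`, in its residue
field: `(1 : 0)` for the point at infinity, and `(θ : 1)` with `θ` the root of `p`
for the point `some p`. -/
def P1Pt.coords : (P : P1Pt Fq) → Fin 2 → P1Pt.Res P
  | none => ![1, 0]
  | some p => ![AdjoinRoot.root p.1, 1]

/-- Evaluate a polynomial in the homogeneous coordinates `t₀, t₁` of the base `P¹`
at a closed point `P`, in the residue field of `P`. -/
def resEval (P : P1Pt Fq) (A : MvPolynomial (Fin 2) Fq) : P1Pt.Res P :=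
  MvPolynomial.aeval (P1Pt.coords P) A

/-- `r_P(s)`: the number of relative degree one points of the fiber of `F_k → P¹`
over `P` at which the binary cubic form `s = (A₀, A₁, A₂, A₃)` vanishes.  These
points are the `(z : 1)` with `z` in the residue field of `P`, together with `(1 : 0)`. -/
def rP (P : P1Pt Fq) (s : Fin 4 → MvPolynomial (Fin 2) Fq) : ℕ :=
  Nat.card {z : P1Pt.Res P //
      resEval P (s 0) * z ^ 3 + resEval P (s 1) * z ^ 2
        + resEval P (s 2) * z + resEval P (s 3) = 0} +
    (if resEval P (s 0) = 0 then 1 else 0)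

/-- The degree of a reduced effective divisor (a finite set of closed points) on `P¹`. -/
def degD (D : Finset (P1Pt Fq)) : ℕ := ∑ P ∈ D, P1Pt.deg P

/-- `r_D(s) = ∏_{P ∣ D} r_P(s)`. -/
def rD (D : Finset (P1Pt Fq)) (s : Fin 4 → MvPolynomial (Fin 2) Fq) : ℕ :=
  ∏ P ∈ D, rP P s

/-- `a_D(s) = ∏_{P ∣ D} (r_P(s) − 1)`. -/
def aD (D : Finset (P1Pt Fq)) (s : Fin 4 → MvPolynomial (Fin 2) Fq) : ℤ :=
  ∏ P ∈ D, ((rP P s : ℤ) - 1)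

/-- `p` is homogeneous of (possibly negative) degree `d`; for `d < 0` this forces
`p = 0`. -/
def IsHomOfDeg (p : MvPolynomial (Fin 2) Fq) (d : ℤ) : Prop :=
  p.IsHomogeneous d.toNat ∧ (d < 0 → p = 0)

/-- The space of global sections of `O(m, ℓ)` on the Hirzebruch surface `F_k`,
viewed as tuples `(A₀, …, A_m)` of binary forms with `A_i` homogeneous of degree
`ℓ − i·k`. -/
def SecSet (m ℓ k : ℕ) : Set (Fin (m + 1) → MvPolynomial (Fin 2) Fq) :=
  {s | ∀ i : Fin (m + 1), IsHomOfDeg (s i) ((ℓ : ℤ) - (i : ℕ) * k)}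

/-- A binary cubic form `s ∈ H⁰(F_k, O(3,ℓ))` is horizontally reducible iff it is
zero or factors as a product of a nonzero quadratic and a nonzero linear form in
`x, y` with homogeneous polynomial coefficients. -/
def HorizRed (k : ℕ) (s : Fin 4 → MvPolynomial (Fin 2) Fq) : Prop :=
  s = 0 ∨ ∃ (b c : ℤ) (B : Fin 3 → MvPolynomial (Fin 2) Fq)
      (C : Fin 2 → MvPolynomial (Fin 2) Fq),
    B ≠ 0 ∧ C ≠ 0 ∧
    (∀ j : Fin 3, IsHomOfDeg (B j) (b - (j : ℕ) * k)) ∧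
    (∀ j : Fin 2, IsHomOfDeg (C j) (c - (j : ℕ) * k)) ∧
    s 0 = B 0 * C 0 ∧ s 1 = B 0 * C 1 + B 1 * C 0 ∧
    s 2 = B 1 * C 1 + B 2 * C 0 ∧ s 3 = B 2 * C 1

instance resDomain (P : P1Pt Fq) : IsDomain (P1Pt.Res P) :=
  match P with
  | none => inferInstanceAs (IsDomain Fq)
  | some p =>
    haveI : Fact (Irreducible p.1) := ⟨p.2.2⟩
    inferInstanceAs (IsDomain (AdjoinRoot p.1))

theorem card_res [Fintype Fq] (P : P1Pt Fq) :
    Nat.card (P1Pt.Res P) = Fintype.card Fq ^ P1Pt.deg P := by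
  match P with
  | none =>
    show Nat.card Fq = Fintype.card Fq ^ 1
    simp
  | some p =>
    show Nat.card (AdjoinRoot p.1) = Fintype.card Fq ^ p.1.natDegree
    have e := (AdjoinRoot.powerBasis' p.2.1).basis.equivFun
    rw [Nat.card_congr e.toEquiv]
    simp [AdjoinRoot.powerBasis'_dim]

instance resFinite [Fintype Fq] (P : P1Pt Fq) : Finite (P1Pt.Res P) := by
  apply Nat.finite_of_card_ne_zero
  rw [card_res]
  exact pow_ne_zero _ Fintype.card_ne_zero

theorem deg_pos (P : P1Pt Fq) : 1 ≤ P1Pt.deg P := by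
  match P with
  | none => exact le_rfl
  | some p => exact p.2.2.natDegree_pos

/-- s vanishes on the fiber over P -/
def Van (P : P1Pt Fq) (s : Fin 4 → MvPolynomial (Fin 2) Fq) : Prop :=
  ∀ i, resEval P (s i) = 0

theorem rP_van [Fintype Fq] (P : P1Pt Fq) (s : Fin 4 → MvPolynomial (Fin 2) Fq) (h : Van P s) :
    rP P s = Fintype.card Fq ^ P1Pt.deg P + 1 := by
  unfold rP
  simp only [h 0, h 1, h 2, h 3, zero_mul, add_zero, if_true]
  rw [← card_res P]
  congr 1
  exact Nat.card_congr (Equiv.subtypeUnivEquiv (fun _ => trivial))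

theorem card_roots_le {R : Type} [CommRing R] [IsDomain R] (f : Polynomial R) (hf : f ≠ 0) (n : ℕ)
    (hn : f.natDegree ≤ n) : Nat.card {z : R // f.eval z = 0} ≤ n := by
  have : {z : R | f.eval z = 0} = (f.roots.toFinset : Set R) := by
    ext z; simp [hf]
  have h2 : Nat.card {z : R // f.eval z = 0} = f.roots.toFinset.card := by
    rw [← Set.ncard_coe_finset, ← this]; rfl
  rw [h2]
  exact (Multiset.toFinset_card_le _).trans ((Polynomial.card_roots' f).trans hn)

theorem rP_not_van (P : P1Pt Fq) (s : Fin 4 → MvPolynomial (Fin 2) Fq) (h : ¬ Van P s) :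
    rP P s ≤ 3 := by
  unfold rP
  set a := resEval P (s 0) with ha
  set b := resEval P (s 1) with hb
  set c := resEval P (s 2) with hc
  set d := resEval P (s 3) with hd
  let f : Polynomial (P1Pt.Res P) := Cubic.toPoly ⟨a, b, c, d⟩
  have hf : f ≠ 0 := by
    intro hf
    apply h
    have := (Cubic.toPoly_eq_zero_iff _).1 hf
    rw [Cubic.ext_iff] at this
    obtain ⟨h0, h1, h2, h3⟩ := this
    intro i
    fin_cases i
    · exact h0
    · exact h1
    · exact h2
    · exact h3
  have he : ∀ z, a * z ^ 3 + b * z ^ 2 + c * z + d = f.eval z := by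
    intro z; simp [f, Cubic.toPoly]
  simp only [he]
  split_ifs with h0
  · have := card_roots_le f hf 2 (by
      have : f.degree ≤ 2 := Cubic.degree_of_a_eq_zero (P := ⟨a, b, c, d⟩) h0
      exact Polynomial.natDegree_le_of_degree_le this)
    omega
  · exact card_roots_le f hf 3 (Polynomial.natDegree_le_of_degree_le Polynomial.degree_cubic_le)

theorem card_gt [Fintype Fq] : 2 ≤ Fintype.card Fq := Fintype.one_lt_card

theorem rP_le [Fintype Fq] (P : P1Pt Fq) (s : Fin 4 → MvPolynomial (Fin 2) Fq) :
    rP P s ≤ (if Van P s then 2 * Fintype.card Fq ^ P1Pt.deg P else 0) + 3 := by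
  split_ifs with h
  · rw [rP_van P s h]
    have : 1 ≤ Fintype.card Fq ^ P1Pt.deg P := Nat.one_le_pow _ _ Fintype.card_pos
    omega
  · have := rP_not_van P s h
    omega

theorem aP_le [Fintype Fq] (P : P1Pt Fq) (s : Fin 4 → MvPolynomial (Fin 2) Fq) :
    ((rP P s : ℤ) - 1).natAbs ≤
      (if Van P s then 1 * Fintype.card Fq ^ P1Pt.deg P else 0) + 2 := by
  split_ifs with h
  · rw [rP_van P s h]
    push_cast
    rw [add_sub_cancel_right, ← Nat.cast_pow, Int.natAbs_natCast]
    omega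
  · have := rP_not_van P s h
    omega

theorem frame [Fintype Fq] (T : Finset (Fin 4 → MvPolynomial (Fin 2) Fq)) (D : Finset (P1Pt Fq))
    (α β Y : ℕ) (w : P1Pt Fq → (Fin 4 → MvPolynomial (Fin 2) Fq) → ℕ)
    (hw : ∀ P s, w P s ≤ (if Van P s then β * Fintype.card Fq ^ P1Pt.deg P else 0) + α)
    (hY : ∀ D' ⊆ D, Fintype.card Fq ^ degD D' * (T.filter (fun s => ∀ P ∈ D', Van P s)).card ≤ Y) :
    ∑ s ∈ T, ∏ P ∈ D, w P s ≤ (β + α) ^ D.card * Y := by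
  calc ∑ s ∈ T, ∏ P ∈ D, w P s
      ≤ ∑ s ∈ T, ∏ P ∈ D, ((if Van P s then β * Fintype.card Fq ^ P1Pt.deg P else 0) + α) :=
        Finset.sum_le_sum fun s _ => Finset.prod_le_prod' fun P _ => hw P s
    _ = ∑ D' ∈ D.powerset, ∑ s ∈ T, (if ∀ P ∈ D', Van P s then
          β ^ D'.card * Fintype.card Fq ^ degD D' else 0) * α ^ (D.card - D'.card) := by
        rw [Finset.sum_comm]
        refine Finset.sum_congr rfl fun s _ => ?_
        rw [Finset.prod_add]
        refine Finset.sum_congr rfl fun D' hD' => ?_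
        rw [Finset.prod_ite_zero, Finset.prod_const, Finset.prod_mul_distrib, Finset.prod_const,
          Finset.prod_pow_eq_pow_sum, Finset.card_sdiff_of_subset (Finset.mem_powerset.1 hD')]
        rfl
    _ ≤ ∑ D' ∈ D.powerset, (β ^ D'.card * α ^ (D.card - D'.card)) * Y := by
        refine Finset.sum_le_sum fun D' hD' => ?_
        rw [← Finset.sum_mul, ← Finset.sum_filter, Finset.sum_const, smul_eq_mul]
        calc _ = (β ^ D'.card * α ^ (D.card - D'.card)) *
              (Fintype.card Fq ^ degD D' * (T.filter (fun s => ∀ P ∈ D', Van P s)).card) := by ring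
          _ ≤ _ := Nat.mul_le_mul_left _ (hY D' (Finset.mem_powerset.1 hD'))
    _ = _ := by rw [← Finset.sum_mul, Finset.sum_pow_mul_eq_add_pow]

/-- homogeneous forms of degree n vanishing on D -/
def HH (n : ℕ) (D : Finset (P1Pt Fq)) : Set (MvPolynomial (Fin 2) Fq) :=
  {A | A.IsHomogeneous n ∧ ∀ P ∈ D, resEval P A = 0}

def ptPoly : P1Pt Fq → Polynomial Fq
  | none => 1
  | some p => p.1

theorem ptPoly_monic (P : P1Pt Fq) : (ptPoly P).Monic := by
  match P with
  | none => exact Polynomial.monic_one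
  | some p => exact p.2.1

theorem deg_eq (P : P1Pt Fq) : P1Pt.deg P = (ptPoly P).natDegree + if P = none then 1 else 0 := by
  match P with
  | none => simp [P1Pt.deg, ptPoly]
  | some p => simp [P1Pt.deg, ptPoly]

theorem degD_eq (D : Finset (P1Pt Fq)) :
    degD D = (∏ P ∈ D, ptPoly P).natDegree + if none ∈ D then 1 else 0 := by
  unfold degD
  simp only [deg_eq]
  rw [Finset.sum_add_distrib, Polynomial.natDegree_prod_of_monic _ _ (fun P _ => ptPoly_monic P)]
  simp

theorem ptPoly_coprime (P Q : P1Pt Fq) (h : P ≠ Q) : IsCoprime (ptPoly P) (ptPoly Q) := by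
  match P, Q with
  | none, _ => exact isCoprime_one_left
  | some p, none => exact isCoprime_one_right
  | some p, some q =>
    show IsCoprime p.1 q.1
    rw [p.2.2.coprime_iff_not_dvd]
    intro hd
    apply h
    have := Polynomial.eq_of_monic_of_associated p.2.1 q.2.1
      (p.2.2.associated_of_dvd q.2.2 hd)
    rw [Subtype.ext this]

theorem eval_inf (f : Polynomial Fq) (n : ℕ) :
    MvPolynomial.aeval (![1, 0] : Fin 2 → Fq) (f.homogenize n) = f.coeff n := by
  unfold Polynomial.homogenize
  rw [map_sum, Finset.sum_eq_single (n, 0)]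
  · simp [MvPolynomial.aeval_monomial, Finsupp.prod_fintype, Finsupp.update]
  · rintro ⟨i, j⟩ hij hne
    rw [Finset.HasAntidiagonal.mem_antidiagonal] at hij
    have : j ≠ 0 := by
      rintro rfl
      apply hne
      simp at hij
      simp [hij]
    simp [MvPolynomial.aeval_monomial, Finsupp.prod_fintype, this]
  · simp

theorem HH_sub (n : ℕ) (D : Finset (P1Pt Fq)) :
    HH n D ⊆ (fun h => ((∏ P ∈ D, ptPoly P) * h).homogenize n) ''
      (Polynomial.degreeLT Fq (n + 1 - degD D) : Set (Polynomial Fq)) := by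
  rintro A ⟨hA, hv⟩
  set f : Polynomial Fq := MvPolynomial.aeval ![Polynomial.X, 1] A with hf
  have hAf : f.homogenize n = A := Polynomial.homogenize_eq_of_isHomogeneous hA rfl
  have hdeg : f.natDegree ≤ n := by
    have := MvPolynomial.aeval_natDegree_le A (m := n) hA.totalDegree_le (n := 1)
      (![Polynomial.X, 1] : Fin 2 → Polynomial Fq) (by intro i; fin_cases i <;> simp)
    simpa using this
  have hg : (∏ P ∈ D, ptPoly P) ∣ f := by
    apply Finset.prod_dvd_of_coprime
    · intro P _ Q _ h
      exact ptPoly_coprime P Q h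
    · intro P hP
      have := hv P hP
      match P with
      | none => exact one_dvd _
      | some p =>
        show p.1 ∣ f
        rw [← AdjoinRoot.mk_eq_zero, ← AdjoinRoot.aeval_eq]
        have h2 := Polynomial.aeval_homogenize_of_eq_one (A := AdjoinRoot p.1) hdeg
          ![AdjoinRoot.root p.1, 1] rfl
        rw [hAf] at h2
        exact h2.symm.trans this
  obtain ⟨h, hh⟩ := hg
  refine ⟨h, ?_, by simp only; rw [← hh, hAf]⟩
  rw [SetLike.mem_coe, Polynomial.mem_degreeLT]
  by_cases h0 : h = 0
  · rw [h0, Polynomial.degree_zero]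
    exact WithBot.bot_lt_coe _
  rw [← Polynomial.natDegree_lt_iff_degree_lt h0, degD_eq]
  have hm : (∏ P ∈ D, ptPoly P).Monic := Polynomial.monic_prod_of_monic _ _ fun P _ => ptPoly_monic P
  have h3 : f.natDegree = (∏ P ∈ D, ptPoly P).natDegree + h.natDegree := by rw [hh, hm.natDegree_mul' h0]
  split_ifs with hn
  · have h4 : f.coeff n = 0 := by
      rw [← eval_inf, hAf]; exact hv none hn
    have : f.natDegree ≠ n := by
      intro h5
      rw [← h5] at h4
      have : f ≠ 0 := by rw [hh]; exact mul_ne_zero hm.ne_zero h0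
      exact this (Polynomial.leadingCoeff_eq_zero.1 h4)
    omega
  · omega

theorem degreeLT_card [Fintype Fq] (n : ℕ) :
    (Polynomial.degreeLT Fq n : Set (Polynomial Fq)).Finite ∧
    (Polynomial.degreeLT Fq n : Set (Polynomial Fq)).ncard = Fintype.card Fq ^ n := by
  have e := Polynomial.degreeLTEquiv Fq n
  have h1 : Nat.card (Polynomial.degreeLT Fq n) = Fintype.card Fq ^ n := by
    rw [Nat.card_congr e.toEquiv]; simp
  refine ⟨?_, h1⟩
  have : Finite (Polynomial.degreeLT Fq n) := Finite.of_equiv _ e.toEquiv.symm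
  exact Set.toFinite _

theorem HH_finite [Fintype Fq] (n : ℕ) (D : Finset (P1Pt Fq)) : (HH n D).Finite :=
  ((degreeLT_card _).1.image _).subset (HH_sub n D)

theorem HH_card [Fintype Fq] (n : ℕ) (D : Finset (P1Pt Fq)) :
    (HH n D).ncard ≤ Fintype.card Fq ^ (n + 1 - degD D) := by
  refine (Set.ncard_le_ncard (HH_sub n D) ((degreeLT_card _).1.image _)).trans ?_
  refine (Set.ncard_image_le (degreeLT_card _).1).trans ?_
  rw [(degreeLT_card _).2]

theorem HH_zero (n : ℕ) (D : Finset (P1Pt Fq)) (h : n < degD D) (A : MvPolynomial (Fin 2) Fq)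
    (hA : A ∈ HH n D) : A = 0 := by
  obtain ⟨f, hf, rfl⟩ := HH_sub n D hA
  have : n + 1 - degD D = 0 := by omega
  rw [this] at hf
  have : f = 0 := by
    rw [SetLike.mem_coe, Polynomial.mem_degreeLT] at hf
    by_contra h
    have := Polynomial.zero_le_degree_iff.2 h
    exact absurd hf (not_lt.2 (by simpa using this))
  simp [this]

theorem homOf {p : MvPolynomial (Fin 2) Fq} {d : ℤ} (h : IsHomOfDeg p d) (n : ℕ) (hd : d = n) :
    p.IsHomogeneous n := by
  subst hd
  simpa using h.1

theorem HHs_empty (n : ℕ) (D : Finset (P1Pt Fq)) (h : n < degD D) : HH n D \ {0} = ∅ := by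
  ext A
  constructor
  · rintro ⟨hA, h0⟩
    exact (h0 (HH_zero n D h A hA)).elim
  · exact fun h => h.elim

theorem HHs_card [Fintype Fq] (n : ℕ) (D : Finset (P1Pt Fq)) :
    (HH n D \ {0}).ncard ≤ Fintype.card Fq ^ (n + 1 - degD D) :=
  (Set.ncard_le_ncard Set.sdiff_subset (HH_finite n D)).trans (HH_card n D)

abbrev BS (k i : ℕ) (D : Finset (P1Pt Fq)) :
    Set (MvPolynomial (Fin 2) Fq × MvPolynomial (Fin 2) Fq × MvPolynomial (Fin 2) Fq) :=
  HH (2 * k + i) D ×ˢ HH (k + i) D ×ˢ (HH i D \ {0})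

abbrev CS (k j : ℕ) (D : Finset (P1Pt Fq)) :
    Set (MvPolynomial (Fin 2) Fq × MvPolynomial (Fin 2) Fq) :=
  HH (k + j) D ×ˢ (HH j D \ {0})

theorem BS_card [Fintype Fq] (k i : ℕ) (D : Finset (P1Pt Fq)) :
    (BS k i D).ncard * Fintype.card Fq ^ (2 * degD D) ≤ Fintype.card Fq ^ (3 * k + 3 * i + 3) := by
  have hq : 0 < Fintype.card Fq := Fintype.card_pos
  rw [Set.ncard_prod, Set.ncard_prod]
  rcases lt_or_ge i (degD D) with h | h
  · rw [HHs_empty i D h]; simp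
  · calc _ ≤ (Fintype.card Fq ^ (2 * k + i + 1 - degD D) * (Fintype.card Fq ^ (k + i + 1 - degD D) *
            Fintype.card Fq ^ (i + 1 - degD D))) * Fintype.card Fq ^ (2 * degD D) :=
          Nat.mul_le_mul_right _ (Nat.mul_le_mul (HH_card _ _)
            (Nat.mul_le_mul (HH_card _ _) (HHs_card _ _)))
      _ ≤ _ := by
        rw [← pow_add, ← pow_add, ← pow_add]
        exact Nat.pow_le_pow_right hq (by omega)

theorem CS_card [Fintype Fq] (k j : ℕ) (D : Finset (P1Pt Fq)) :
    (CS k j D).ncard * Fintype.card Fq ^ (2 * degD D) ≤ Fintype.card Fq ^ (k + 2 * j + 2) := by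
  have hq : 0 < Fintype.card Fq := Fintype.card_pos
  rw [Set.ncard_prod]
  rcases lt_or_ge j (degD D) with h | h
  · rw [HHs_empty j D h]; simp
  · calc _ ≤ (Fintype.card Fq ^ (k + j + 1 - degD D) *
            Fintype.card Fq ^ (j + 1 - degD D)) * Fintype.card Fq ^ (2 * degD D) :=
          Nat.mul_le_mul_right _ (Nat.mul_le_mul (HH_card _ _) (HHs_card _ _))
      _ ≤ _ := by
        rw [← pow_add, ← pow_add]
        exact Nat.pow_le_pow_right hq (by omega)

theorem BS_finite [Fintype Fq] (k i : ℕ) (D : Finset (P1Pt Fq)) : (BS k i D).Finite :=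
  (HH_finite _ _).prod ((HH_finite _ _).prod ((HH_finite _ _).subset Set.sdiff_subset))

theorem CS_finite [Fintype Fq] (k i : ℕ) (D : Finset (P1Pt Fq)) : (CS k i D).Finite :=
  (HH_finite _ _).prod ((HH_finite _ _).subset Set.sdiff_subset)

def mulMap (x : (MvPolynomial (Fin 2) Fq × MvPolynomial (Fin 2) Fq × MvPolynomial (Fin 2) Fq) ×
    (MvPolynomial (Fin 2) Fq × MvPolynomial (Fin 2) Fq)) : Fin 4 → MvPolynomial (Fin 2) Fq :=
  ![x.1.1 * x.2.1, x.1.1 * x.2.2 + x.1.2.1 * x.2.1, x.1.2.1 * x.2.2 + x.1.2.2 * x.2.1,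
    x.1.2.2 * x.2.2]

theorem gauss {R : Type} [CommRing R] [IsDomain R] (b0 b1 b2 c0 c1 : R)
    (h0 : b0 * c0 = 0) (h1 : b0 * c1 + b1 * c0 = 0) (h2 : b1 * c1 + b2 * c0 = 0)
    (h3 : b2 * c1 = 0) (hb : ¬ (b0 = 0 ∧ b1 = 0 ∧ b2 = 0)) : c0 = 0 ∧ c1 = 0 := by
  by_contra hc
  apply hb
  by_cases hc0 : c0 = 0
  · have hc1 : c1 ≠ 0 := fun h => hc ⟨hc0, h⟩
    subst hc0
    simp_all
  · have hb0 : b0 = 0 := by simpa [hc0] using h0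
    subst hb0
    have hb1 : b1 = 0 := by simpa [hc0] using h1
    subst hb1
    simpa [hc0] using h2

/-- specially reducible sections -/
def SR (ℓ k : ℕ) : Set (Fin 4 → MvPolynomial (Fin 2) Fq) :=
  {s ∈ SecSet 3 ℓ k | HorizRed k s ∧ s 3 ≠ 0}

theorem SR_sub (m k : ℕ) (D : Finset (P1Pt Fq)) :
    {s ∈ SR (3 * k + m) k | ∀ P ∈ D, Van P s} ⊆ ⋃ x : Fin (m + 1) × {D1 // D1 ∈ D.powerset},
      mulMap '' (BS k x.1 x.2.1 ×ˢ CS k (m - x.1) (D \ x.2.1)) := by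
  rintro s ⟨⟨hs, hr, h3⟩, hv⟩
  rcases hr with rfl | ⟨b, c, B, C, -, -, hB, hC, e0, e1, e2, e3⟩
  · exact (h3 rfl).elim
  have hB2 : B 2 ≠ 0 := by intro h; rw [h] at e3; simp [e3] at h3
  have hC1 : C 1 ≠ 0 := by intro h; rw [h] at e3; simp [e3] at h3
  have hb : 2 * (k : ℤ) ≤ b := by
    by_contra hlt
    exact hB2 ((hB 2).2 (by simp; omega))
  have hc : (k : ℤ) ≤ c := by
    by_contra hlt
    exact hC1 ((hC 1).2 (by simp; omega))
  obtain ⟨i, rfl⟩ : ∃ i : ℕ, b = 2 * (k : ℤ) + i := ⟨(b - 2 * k).toNat, by omega⟩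
  obtain ⟨j, rfl⟩ : ∃ j : ℕ, c = (k : ℤ) + j := ⟨(c - k).toNat, by omega⟩
  have b0 : (B 0).IsHomogeneous (2 * k + i) := homOf (hB 0) _ (by simp)
  have b1 : (B 1).IsHomogeneous (k + i) := homOf (hB 1) _ (by simp; ring)
  have b2 : (B 2).IsHomogeneous i := homOf (hB 2) _ (by simp)
  have c0 : (C 0).IsHomogeneous (k + j) := homOf (hC 0) _ (by simp)
  have c1 : (C 1).IsHomogeneous j := homOf (hC 1) _ (by simp)
  have s3 : (s 3).IsHomogeneous m := homOf (hs 3) _ (by push_cast; simp)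
  have hm : m = i + j := by
    rw [e3] at s3 h3
    exact s3.inj_right (b2.mul c1) h3
  set D1 := D.filter (fun P => ∀ j, resEval P (B j) = 0) with hD1
  have hCv : ∀ P ∈ D \ D1, resEval P (C 0) = 0 ∧ resEval P (C 1) = 0 := by
    intro P hP
    rw [Finset.mem_sdiff] at hP
    have hV := hv P hP.1
    have v0 := hV 0
    have v1 := hV 1
    have v2 := hV 2
    have v3 := hV 3
    rw [e0] at v0
    rw [e1] at v1
    rw [e2] at v2
    rw [e3] at v3
    simp only [resEval, map_mul, map_add] at v0 v1 v2 v3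
    refine gauss _ _ _ _ _ v0 v1 v2 v3 ?_
    rintro ⟨w0, w1, w2⟩
    apply hP.2
    rw [hD1, Finset.mem_filter]
    refine ⟨hP.1, fun j => ?_⟩
    fin_cases j
    · exact w0
    · exact w1
    · exact w2
  have hBv : ∀ P ∈ D1, ∀ j, resEval P (B j) = 0 := fun P hP => (Finset.mem_filter.1 hP).2
  rw [Set.mem_iUnion]
  refine ⟨(⟨i, by omega⟩, ⟨D1, Finset.mem_powerset.2 (Finset.filter_subset _ _)⟩), ?_⟩
  have hj : m - i = j := by omega
  refine ⟨((B 0, B 1, B 2), (C 0, C 1)), ⟨⟨⟨b0, fun P hP => hBv P hP 0⟩,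
    ⟨b1, fun P hP => hBv P hP 1⟩, ⟨b2, fun P hP => hBv P hP 2⟩, hB2⟩, ?_⟩, ?_⟩
  · simp only [hj]
    exact ⟨⟨c0, fun P hP => (hCv P hP).1⟩, ⟨c1, fun P hP => (hCv P hP).2⟩, hC1⟩
  · ext1 x
    fin_cases x
    · exact e0.symm
    · exact e1.symm
    · exact e2.symm
    · exact e3.symm

theorem two_pow_le [Fintype Fq] (D : Finset (P1Pt Fq)) :
    2 ^ D.card ≤ Fintype.card Fq ^ degD D := by
  unfold degD
  rw [← Finset.prod_pow_eq_pow_sum, ← Finset.prod_const]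
  refine Finset.prod_le_prod' fun P _ => ?_
  calc 2 ≤ Fintype.card Fq ^ 1 := by simpa using card_gt
    _ ≤ _ := Nat.pow_le_pow_right Fintype.card_pos (deg_pos P)

theorem geom (q E n : ℕ) (hq : 2 ≤ q) :
    ∑ i ∈ Finset.range (n + 1), q ^ (E + i) ≤ 2 * q ^ (E + n) := by
  induction n with
  | zero => simp; omega
  | succ n ih =>
    rw [Finset.sum_range_succ]
    have : 2 * q ^ (E + n) ≤ q ^ (E + (n + 1)) := by
      rw [← add_assoc, pow_succ, mul_comm]
      exact Nat.mul_le_mul_left _ hq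
    omega

theorem SR_card [Fintype Fq] (m k : ℕ) (D : Finset (P1Pt Fq)) :
    {s ∈ SR (3 * k + m) k | ∀ P ∈ D, Van P s}.Finite ∧
    Fintype.card Fq ^ degD D * {s ∈ SR (3 * k + m) k | ∀ P ∈ D, Van P s}.ncard ≤
      2 * Fintype.card Fq ^ (4 * k + 3 * m + 5) := by
  have hq : 0 < Fintype.card Fq := Fintype.card_pos
  have hfin : ∀ x : Fin (m + 1) × {D1 // D1 ∈ D.powerset},
      (BS k x.1 x.2.1 ×ˢ CS k (m - x.1) (D \ x.2.1)).Finite :=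
    fun x => (BS_finite _ _ _).prod (CS_finite _ _ _)
  have hU := Set.finite_iUnion (fun x => (hfin x).image mulMap)
  refine ⟨hU.subset (SR_sub m k D), ?_⟩
  set q := Fintype.card Fq with hqdef
  have hterm : ∀ x : Fin (m + 1) × {D1 // D1 ∈ D.powerset},
      q ^ (2 * degD D) * (BS k x.1 x.2.1 ×ˢ CS k (m - x.1) (D \ x.2.1)).ncard ≤
        q ^ (4 * k + 2 * m + 5 + x.1) := by
    rintro ⟨i, D1, hD1⟩
    have hi := i.2
    have hd : degD D = degD D1 + degD (D \ D1) := by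
      rw [add_comm]
      exact (Finset.sum_sdiff (Finset.mem_powerset.1 hD1)).symm
    rw [Set.ncard_prod, hd]
    calc _ = ((BS k i D1).ncard * q ^ (2 * degD D1)) *
          ((CS k (m - i) (D \ D1)).ncard * q ^ (2 * degD (D \ D1))) := by
            simp only [mul_add, pow_add]; ring
      _ ≤ q ^ (3 * k + 3 * i + 3) * q ^ (k + 2 * (m - i) + 2) :=
          Nat.mul_le_mul (BS_card _ _ _) (CS_card _ _ _)
      _ = _ := by
          rw [← pow_add]; congr 1; simp only; omega
  have h1 : {s ∈ SR (3 * k + m) k | ∀ P ∈ D, Van P s}.ncard ≤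
      ∑ x : Fin (m + 1) × {D1 // D1 ∈ D.powerset},
        (BS k x.1 x.2.1 ×ˢ CS k (m - x.1) (D \ x.2.1)).ncard :=
    (Set.ncard_le_ncard (SR_sub m k D) hU).trans ((Set.ncard_iUnion_le_of_fintype _).trans
      (Finset.sum_le_sum fun x _ => Set.ncard_image_le (hfin x)))
  refine Nat.le_of_mul_le_mul_left ?_ (pow_pos hq (degD D))
  calc q ^ degD D * (q ^ degD D * {s ∈ SR (3 * k + m) k | ∀ P ∈ D, Van P s}.ncard)
      = q ^ (2 * degD D) * {s ∈ SR (3 * k + m) k | ∀ P ∈ D, Van P s}.ncard := by ring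
    _ ≤ q ^ (2 * degD D) * _ := Nat.mul_le_mul_left _ h1
    _ ≤ ∑ x : Fin (m + 1) × {D1 // D1 ∈ D.powerset}, q ^ (4 * k + 2 * m + 5 + x.1) := by
        rw [Finset.mul_sum]
        exact Finset.sum_le_sum fun x _ => hterm x
    _ = 2 ^ D.card * ∑ i ∈ Finset.range (m + 1), q ^ (4 * k + 2 * m + 5 + i) := by
        rw [Fintype.sum_prod_type, Finset.sum_range, Finset.mul_sum]
        refine Finset.sum_congr rfl fun i _ => ?_
        simp
    _ ≤ q ^ degD D * (2 * q ^ (4 * k + 2 * m + 5 + m)) :=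
        Nat.mul_le_mul (two_pow_le D) (geom _ _ _ card_gt)
    _ = _ := by congr 3; ring

/-- nonzero x-reducible sections -/
def XR (ℓ k : ℕ) : Set (Fin 4 → MvPolynomial (Fin 2) Fq) :=
  {s ∈ SecSet 3 ℓ k | s ≠ 0 ∧ s 3 = 0}

theorem XR_sub (m k : ℕ) (D : Finset (P1Pt Fq)) :
    {s ∈ XR (3 * k + m) k | ∀ P ∈ D, Van P s} ⊆
      (fun x : MvPolynomial (Fin 2) Fq × MvPolynomial (Fin 2) Fq × MvPolynomial (Fin 2) Fq =>
        ![x.1, x.2.1, x.2.2, 0]) ''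
        (HH (3 * k + m) D ×ˢ HH (2 * k + m) D ×ˢ HH (k + m) D) := by
  rintro s ⟨⟨hs, -, h3⟩, hv⟩
  refine ⟨(s 0, s 1, s 2), ⟨⟨homOf (hs 0) _ (by simp), fun P hP => hv P hP 0⟩,
    ⟨homOf (hs 1) _ (by push_cast; simp; ring), fun P hP => hv P hP 1⟩,
    ⟨homOf (hs 2) _ (by push_cast; simp; ring), fun P hP => hv P hP 2⟩⟩, ?_⟩
  ext1 x
  fin_cases x
  · rfl
  · rfl
  · rfl
  · exact h3.symm

theorem XR_card [Fintype Fq] (m k : ℕ) (D : Finset (P1Pt Fq)) :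
    {s ∈ XR (3 * k + m) k | ∀ P ∈ D, Van P s}.Finite ∧
    Fintype.card Fq ^ degD D * {s ∈ XR (3 * k + m) k | ∀ P ∈ D, Van P s}.ncard ≤
      Fintype.card Fq ^ (6 * k + 3 * m + 3) := by
  have hq : 0 < Fintype.card Fq := Fintype.card_pos
  have hfin : (HH (3 * k + m) D ×ˢ HH (2 * k + m) D ×ˢ HH (k + m) D).Finite :=
    (HH_finite _ _).prod ((HH_finite _ _).prod (HH_finite _ _))
  refine ⟨(hfin.image _).subset (XR_sub m k D), ?_⟩
  rcases lt_or_ge (3 * k + m) (degD D) with h | h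
  · have : {s ∈ XR (3 * k + m) k | ∀ P ∈ D, Van P s} = ∅ := by
      rw [Set.eq_empty_iff_forall_notMem]
      intro s hs
      obtain ⟨x, ⟨h0, h1, h2⟩, hx⟩ := XR_sub m k D hs
      apply hs.1.2.1
      rw [← hx]
      have e0 := HH_zero _ _ h _ h0
      have e1 := HH_zero _ _ (by omega) _ h1
      have e2 := HH_zero _ _ (by omega) _ h2
      simp only [e0, e1, e2]
      ext1 i
      fin_cases i <;> rfl
    rw [this]; simp
  · calc _ ≤ Fintype.card Fq ^ degD D * (Fintype.card Fq ^ (3 * k + m + 1 - degD D) *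
          (Fintype.card Fq ^ (2 * k + m + 1 - degD D) * Fintype.card Fq ^ (k + m + 1 - degD D))) := by
          refine Nat.mul_le_mul_left _ ?_
          refine (Set.ncard_le_ncard (XR_sub m k D) (hfin.image _)).trans ?_
          refine (Set.ncard_image_le hfin).trans ?_
          rw [Set.ncard_prod, Set.ncard_prod]
          exact Nat.mul_le_mul (HH_card _ _) (Nat.mul_le_mul (HH_card _ _) (HH_card _ _))
      _ ≤ _ := by
        rw [← pow_add, ← pow_add, ← pow_add]
        exact Nat.pow_le_pow_right hq (by omega)

theorem frame' [Fintype Fq] (T : Set (Fin 4 → MvPolynomial (Fin 2) Fq)) (D : Finset (P1Pt Fq))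
    (Y : ℕ) (hT : T.Finite)
    (hY : ∀ D' : Finset (P1Pt Fq), Fintype.card Fq ^ degD D' * {s ∈ T | ∀ P ∈ D', Van P s}.ncard ≤ Y) :
    (∑ s ∈ hT.toFinset, rD D s ≤ 5 ^ D.card * Y) ∧
    (∑ s ∈ hT.toFinset, (aD D s).natAbs ≤ 3 ^ D.card * Y) := by
  have key : ∀ D' ⊆ D, Fintype.card Fq ^ degD D' *
      (hT.toFinset.filter (fun s => ∀ P ∈ D', Van P s)).card ≤ Y := by
    intro D' _
    refine le_trans (le_of_eq ?_) (hY D')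
    rw [← Set.ncard_coe_finset]
    congr 2
    ext s
    simp
  constructor
  · exact frame hT.toFinset D 3 2 Y rP rP_le key
  · have := frame hT.toFinset D 2 1 Y (fun P s => ((rP P s : ℤ) - 1).natAbs) aP_le key
    refine le_trans (le_of_eq ?_) this
    refine Finset.sum_congr rfl fun s _ => ?_
    unfold aD
    exact map_prod Int.natAbsHom _ _

theorem natAbs_finsum (T : Set (Fin 4 → MvPolynomial (Fin 2) Fq)) (hT : T.Finite)
    (f : (Fin 4 → MvPolynomial (Fin 2) Fq) → ℤ) :
    (∑ᶠ s ∈ T, f s).natAbs ≤ ∑ s ∈ hT.toFinset, (f s).natAbs := by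
  rw [finsum_mem_eq_finite_toFinset_sum _ hT]
  exact Int.natAbs_sum_le _ _

theorem zero_case [Fintype Fq] (ℓ k : ℕ) (D : Finset (P1Pt Fq)) :
    ((∑ᶠ s ∈ {s ∈ SecSet 3 ℓ k | s = 0}, rD D s) ≤ 2 ^ D.card * Fintype.card Fq ^ degD D) ∧
    ((∑ᶠ s ∈ {s ∈ SecSet 3 ℓ k | s = 0}, aD D s).natAbs ≤ Fintype.card Fq ^ degD D) := by
  have hset : {s ∈ (SecSet 3 ℓ k : Set (Fin 4 → MvPolynomial (Fin 2) Fq)) | s = 0} = {0} := by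
    ext s
    constructor
    · rintro ⟨_, h⟩; exact h
    · rintro rfl
      exact ⟨fun i => ⟨MvPolynomial.isHomogeneous_zero _ _ _, fun _ => rfl⟩, rfl⟩
  have hv : ∀ P : P1Pt Fq, Van P 0 := fun P i => by simp [resEval]
  rw [hset, finsum_mem_singleton, finsum_mem_singleton]
  constructor
  · unfold rD degD
    rw [← Finset.prod_pow_eq_pow_sum, ← Finset.prod_const, ← Finset.prod_mul_distrib]
    refine Finset.prod_le_prod' fun P _ => ?_
    rw [rP_van P 0 (hv P)]
    have : 1 ≤ Fintype.card Fq ^ P1Pt.deg P := Nat.one_le_pow _ _ Fintype.card_pos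
    omega
  · unfold aD degD
    rw [← Finset.prod_pow_eq_pow_sum]
    simp only [rP_van _ _ (hv _)]
    push_cast
    simp only [add_sub_cancel_right]
    exact_mod_cast le_refl (∏ P ∈ D, Fintype.card Fq ^ P1Pt.deg P)

/-- Let `ℓ, k ≥ 0` with `ℓ ≥ 3k` and `D` a reduced effective
divisor on `P¹`.  Then, with implied constants depending only on `q`:
`R^{hr}(ℓ,k,D) = O(5^{ω(D)} q^{3ℓ−3k})`, `R^{sr}(ℓ,k,D) = O(5^{ω(D)} q^{3ℓ−5k})`,
`R^{z}(ℓ,k,D) = O(2^{ω(D)} q^{deg D})`, `|Φ^{hr}(ℓ,k,D)| = O(3^{ω(D)} q^{3ℓ−3k})`,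
`|Φ^{sr}(ℓ,k,D)| = O(3^{ω(D)} q^{3ℓ−5k})`, and `|Φ^{z}(ℓ,k,D)| = O(q^{deg D})`.
Here the superscripts `hr`, `sr`, `z` restrict the sum over `V(ℓ,k)` to the nonzero
horizontally reducible, specially reducible (horizontally reducible with `A₃ ≠ 0`),
and zero sections respectively. -/
theorem statement_14 (Fq : Type) [Field Fq] [Fintype Fq] :
    ∃ K : ℕ, 0 < K ∧
      ∀ (ℓ k : ℕ) (D : Finset (P1Pt Fq)), 3 * k ≤ ℓ →
        ((∑ᶠ s ∈ {s ∈ SecSet 3 ℓ k | s ≠ 0 ∧ HorizRed k s}, rD D s) ≤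
            K * 5 ^ D.card * Fintype.card Fq ^ (3 * ℓ - 3 * k)) ∧
        ((∑ᶠ s ∈ {s ∈ SecSet 3 ℓ k | HorizRed k s ∧ s 3 ≠ 0}, rD D s) ≤
            K * 5 ^ D.card * Fintype.card Fq ^ (3 * ℓ - 5 * k)) ∧
        ((∑ᶠ s ∈ {s ∈ SecSet 3 ℓ k | s = 0}, rD D s) ≤
            K * 2 ^ D.card * Fintype.card Fq ^ degD D) ∧
        ((∑ᶠ s ∈ {s ∈ SecSet 3 ℓ k | s ≠ 0 ∧ HorizRed k s}, aD D s).natAbs ≤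
            K * 3 ^ D.card * Fintype.card Fq ^ (3 * ℓ - 3 * k)) ∧
        ((∑ᶠ s ∈ {s ∈ SecSet 3 ℓ k | HorizRed k s ∧ s 3 ≠ 0}, aD D s).natAbs ≤
            K * 3 ^ D.card * Fintype.card Fq ^ (3 * ℓ - 5 * k)) ∧
        ((∑ᶠ s ∈ {s ∈ SecSet 3 ℓ k | s = 0}, aD D s).natAbs ≤
            K * Fintype.card Fq ^ degD D) := by
  have hq : 0 < Fintype.card Fq := Fintype.card_pos
  refine ⟨3 * Fintype.card Fq ^ 5, by positivity, ?_⟩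
  intro ℓ k D hℓ
  obtain ⟨m, rfl⟩ := Nat.exists_eq_add_of_le hℓ
  have hS : (SR (3 * k + m) k : Set (Fin 4 → MvPolynomial (Fin 2) Fq)).Finite := by
    simpa using (SR_card (Fq := Fq) m k ∅).1
  have hX : (XR (3 * k + m) k : Set (Fin 4 → MvPolynomial (Fin 2) Fq)).Finite := by
    simpa using (XR_card (Fq := Fq) m k ∅).1
  obtain ⟨S1, S2⟩ := frame' (SR (3 * k + m) k) D _ hS (fun D' => (SR_card m k D').2)
  obtain ⟨X1, X2⟩ := frame' (XR (3 * k + m) k) D _ hX (fun D' => (XR_card m k D').2)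
  obtain ⟨Z1, Z2⟩ := zero_case (ℓ := 3 * k + m) (k := k) D
  set q := Fintype.card Fq with hqd
  have hsub : {s ∈ (SecSet 3 (3 * k + m) k : Set (Fin 4 → MvPolynomial (Fin 2) Fq)) |
      s ≠ 0 ∧ HorizRed k s} ⊆ XR (3 * k + m) k ∪ SR (3 * k + m) k := by
    rintro s ⟨h1, h2, h3⟩
    by_cases h : s 3 = 0
    · exact Or.inl ⟨h1, h2, h⟩
    · exact Or.inr ⟨h1, h3, h⟩
  have hH := (hX.union hS).subset hsub
  have hsum : ∀ f : (Fin 4 → MvPolynomial (Fin 2) Fq) → ℕ,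
      ∑ s ∈ hH.toFinset, f s ≤ ∑ s ∈ hX.toFinset, f s + ∑ s ∈ hS.toFinset, f s := by
    intro f
    refine le_trans (Finset.sum_le_sum_of_subset (t := hX.toFinset ∪ hS.toFinset) ?_) ?_
    · intro s hs
      simpa using hsub (by simpa using hs)
    · rw [← Finset.sum_union_inter]
      exact Nat.le_add_right _ _
  have e1 : 3 * (3 * k + m) - 3 * k = 6 * k + 3 * m := by omega
  have e2 : 3 * (3 * k + m) - 5 * k = 4 * k + 3 * m := by omega
  have hq5 : 1 ≤ q ^ 5 := Nat.one_le_pow _ _ hq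
  have b1 : 2 * q ^ (4 * k + 3 * m + 5) ≤ 3 * q ^ 5 * q ^ (4 * k + 3 * m) := by
    rw [pow_add _ _ 5]
    nlinarith [Nat.zero_le (q ^ (4 * k + 3 * m) * q ^ 5)]
  have b2 : q ^ (6 * k + 3 * m + 3) + 2 * q ^ (4 * k + 3 * m + 5) ≤
      3 * q ^ 5 * q ^ (6 * k + 3 * m) := by
    have u1 : q ^ (6 * k + 3 * m + 3) ≤ q ^ (6 * k + 3 * m + 5) :=
      Nat.pow_le_pow_right hq (by omega)
    have u2 : q ^ (4 * k + 3 * m + 5) ≤ q ^ (6 * k + 3 * m + 5) :=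
      Nat.pow_le_pow_right hq (by omega)
    have u3 : 3 * q ^ 5 * q ^ (6 * k + 3 * m) = 3 * q ^ (6 * k + 3 * m + 5) := by
      rw [pow_add _ _ 5]; ring
    omega
  rw [e1, e2]
  have fin1 : ∀ a c : ℕ, 3 * q ^ 5 * a * c = a * (3 * q ^ 5 * c) := fun a c => by ring
  have one_le : 1 ≤ 3 * q ^ 5 := by omega
  refine ⟨?_, ?_, ?_, ?_, ?_, ?_⟩
  · rw [finsum_mem_eq_finite_toFinset_sum _ hH, fin1]
    refine (hsum _).trans ((Nat.add_le_add X1 S1).trans ?_)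
    rw [← mul_add]
    exact Nat.mul_le_mul_left _ b2
  · refine (finsum_mem_eq_finite_toFinset_sum (rD D) hS).le.trans ?_
    rw [fin1]
    exact S1.trans (Nat.mul_le_mul_left _ b1)
  · refine Z1.trans ?_
    rw [mul_assoc]
    exact Nat.le_mul_of_pos_left _ one_le
  · refine (natAbs_finsum _ hH _).trans ?_
    rw [fin1]
    refine (hsum _).trans ((Nat.add_le_add X2 S2).trans ?_)
    rw [← mul_add]
    exact Nat.mul_le_mul_left _ b2
  · refine (natAbs_finsum _ hS _).trans ?_
    rw [fin1]
    exact S2.trans (Nat.mul_le_mul_left _ b1)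
  · exact Z2.trans (Nat.le_mul_of_pos_left _ one_le)

end Stmt14
end
end

section
/- Let ℓ, k ≥ 0 be integers and D a reduced effective divisor on P¹ with ℓ ≥ 3k and ℓ ≥ deg D. Then R^{xir}(ℓ,k,D) = Σ_{D₀ ⊆ D} [ q^{4ℓ−6k+4−deg D₀} − q^{3ℓ−3k+3} if ℓ−3k ≥ deg D₀, and 0 otherwise ], where D₀ ranges over all subdivisors of D (including 0 and D). Consequently, by inclusion–exclusion, Φ^{xir}(ℓ,k,D) = q^{4ℓ−6k+4−deg D} − q^{3ℓ−3k+3} if ℓ−3k ≥ deg D, and Φ^{xir}(ℓ,k,D) = 0 otherwise. -/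
/-!
Statement 16.  Exact formulas for the root-counting sums `R^{xir}(ℓ,k,D)` and
`Φ^{xir}(ℓ,k,D)` over the x-irreducible binary cubic forms (those with `A₃ ≠ 0`)
on the Hirzebruch surface `F_k` over `F_q`, in the small range `ℓ ≥ deg D`.
-/
open scoped Classical

noncomputable section

namespace Stmt16

/-- Closed points of the projective line `P¹` over `F_q`: `none` is the point at
infinity, and `some p` corresponds to the monic irreducible polynomial `p`. -/
abbrev P1Pt (Fq : Type) [Field Fq] : Type :=
  Option {p : Polynomial Fq // p.Monic ∧ Irreducible p}

variable {Fq : Type} [Field Fq]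

/-- The degree of a closed point of `P¹`. -/
def P1Pt.deg : P1Pt Fq → ℕ
  | none => 1
  | some p => p.1.natDegree

/-- The residue field of a closed point of `P¹`. -/
def P1Pt.Res : P1Pt Fq → Type
  | none => Fq
  | some p => AdjoinRoot p.1

instance (P : P1Pt Fq) : CommRing (P1Pt.Res P) :=
  match P with
  | none => inferInstanceAs (CommRing Fq)
  | some p => inferInstanceAs (CommRing (AdjoinRoot p.1))

instance (P : P1Pt Fq) : Algebra Fq (P1Pt.Res P) :=
  match P with
  | none => Algebra.id Fq
  | some p => inferInstanceAs (Algebra Fq (AdjoinRoot p.1))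

/-- The homogeneous coordinates `(t₀ : t₁)` of a closed point of `P¹`, in its residue
field: `(1 : 0)` for the point at infinity, and `(θ : 1)` with `θ` the root of `p`
for the point `some p`. -/
def P1Pt.coords : (P : P1Pt Fq) → Fin 2 → P1Pt.Res P
  | none => ![1, 0]
  | some p => ![AdjoinRoot.root p.1, 1]

/-- Evaluate a polynomial in the homogeneous coordinates `t₀, t₁` of the base `P¹`
at a closed point `P`, in the residue field of `P`. -/
def resEval (P : P1Pt Fq) (A : MvPolynomial (Fin 2) Fq) : P1Pt.Res P :=
  MvPolynomial.aeval (P1Pt.coords P) A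

/-- `r_P(s)`: the number of relative degree one points of the fiber of `F_k → P¹`
over `P` at which the binary cubic form `s = (A₀, A₁, A₂, A₃)` vanishes.  These
points are the `(z : 1)` with `z` in the residue field of `P`, together with `(1 : 0)`. -/
def rP (P : P1Pt Fq) (s : Fin 4 → MvPolynomial (Fin 2) Fq) : ℕ :=
  Nat.card {z : P1Pt.Res P //
      resEval P (s 0) * z ^ 3 + resEval P (s 1) * z ^ 2
        + resEval P (s 2) * z + resEval P (s 3) = 0} +
    (if resEval P (s 0) = 0 then 1 else 0)

/-- The degree of a reduced effective divisor (a finite set of closed points) on `P¹`. -/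
def degD (D : Finset (P1Pt Fq)) : ℕ := ∑ P ∈ D, P1Pt.deg P

/-- `r_D(s) = ∏_{P ∣ D} r_P(s)`. -/
def rD (D : Finset (P1Pt Fq)) (s : Fin 4 → MvPolynomial (Fin 2) Fq) : ℕ :=
  ∏ P ∈ D, rP P s

/-- `a_D(s) = ∏_{P ∣ D} (r_P(s) − 1)`. -/
def aD (D : Finset (P1Pt Fq)) (s : Fin 4 → MvPolynomial (Fin 2) Fq) : ℤ :=
  ∏ P ∈ D, ((rP P s : ℤ) - 1)

/-- `p` is homogeneous of (possibly negative) degree `d`; for `d < 0` this forces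
`p = 0`. -/
def IsHomOfDeg (p : MvPolynomial (Fin 2) Fq) (d : ℤ) : Prop :=
  p.IsHomogeneous d.toNat ∧ (d < 0 → p = 0)

/-- The space of global sections of `O(m, ℓ)` on the Hirzebruch surface `F_k`,
viewed as tuples `(A₀, …, A_m)` of binary forms with `A_i` homogeneous of degree
`ℓ − i·k`. -/
def SecSet (m ℓ k : ℕ) : Set (Fin (m + 1) → MvPolynomial (Fin 2) Fq) :=
  {s | ∀ i : Fin (m + 1), IsHomOfDeg (s i) ((ℓ : ℤ) - (i : ℕ) * k)}

/-- A binary cubic form `s ∈ H⁰(F_k, O(3,ℓ))` is horizontally reducible iff it is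
zero or factors as a product of a nonzero quadratic and a nonzero linear form in
`x, y` with homogeneous polynomial coefficients. -/
def HorizRed (k : ℕ) (s : Fin 4 → MvPolynomial (Fin 2) Fq) : Prop :=
  s = 0 ∨ ∃ (b c : ℤ) (B : Fin 3 → MvPolynomial (Fin 2) Fq)
      (C : Fin 2 → MvPolynomial (Fin 2) Fq),
    B ≠ 0 ∧ C ≠ 0 ∧
    (∀ j : Fin 3, IsHomOfDeg (B j) (b - (j : ℕ) * k)) ∧
    (∀ j : Fin 2, IsHomOfDeg (C j) (c - (j : ℕ) * k)) ∧
    s 0 = B 0 * C 0 ∧ s 1 = B 0 * C 1 + B 1 * C 0 ∧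
    s 2 = B 1 * C 1 + B 2 * C 0 ∧ s 3 = B 2 * C 1

open Polynomial in
lemma finite_degreeLT (F : Type) [Field F] [Finite F] (n : ℕ) : Finite (degreeLT F n) :=
  Finite.of_equiv _ (degreeLTEquiv F n).symm.toEquiv

open Polynomial in
lemma card_degreeLT (F : Type) [Field F] [Fintype F] (n : ℕ) :
    Nat.card (degreeLT F n) = Fintype.card F ^ n := by
  rw [Nat.card_congr (degreeLTEquiv F n).toEquiv]
  simp

lemma sum_comp_hom {V W : Type*} [AddCommGroup V] [AddCommGroup W] [Fintype V] [Fintype W]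
    (φ : V →+ W) (h : Nat.card V = Nat.card φ.ker * Nat.card W) (F : W → ℤ) :
    ∑ v, F (φ v) = Nat.card φ.ker * ∑ w, F w := by
  have hr : Nat.card φ.range = Nat.card W := by
    have h1 := φ.ker.card_eq_card_quotient_mul_card_addSubgroup
    rw [Nat.card_congr (QuotientAddGroup.quotientKerEquivRange φ).toEquiv, h, mul_comm] at h1
    exact (Nat.eq_of_mul_eq_mul_right Nat.card_pos h1).symm
  have hs : Function.Surjective φ := by
    rw [← AddMonoidHom.range_eq_top]
    exact AddSubgroup.eq_top_of_card_eq _ hr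
  rw [← Finset.sum_fiberwise (s := Finset.univ) (g := φ), Finset.mul_sum]
  refine Finset.sum_congr rfl fun w _ => ?_
  have : ∀ v ∈ Finset.univ.filter (fun v => φ v = w), F (φ v) = F w := by
    intro v hv
    rw [(Finset.mem_filter.1 hv).2]
  rw [Finset.sum_congr rfl this, Finset.sum_const, nsmul_eq_mul]
  congr 2
  obtain ⟨v0, rfl⟩ := hs w
  rw [← Fintype.card_subtype, ← Nat.card_eq_fintype_card]
  refine Nat.card_congr ⟨fun v => ⟨v.1 - v0, ?_⟩, fun u => ⟨u.1 + v0, ?_⟩, fun v => ?_, fun u => ?_⟩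
  · rw [AddMonoidHom.mem_ker, map_sub, v.2, sub_self]
  · rw [map_add, AddMonoidHom.mem_ker.1 u.2, zero_add]
  · simp
  · simp

/-- fibre sum over the leading coefficient -/
lemma cubic_sum {K : Type*} [CommRing K] [Fintype K] (hK : IsField K) (b c d : K) :
    ∑ a : K, (((Nat.card {z : K // a * z ^ 3 + b * z ^ 2 + c * z + d = 0} +
      (if a = 0 then 1 else 0) : ℕ) : ℤ)) = Nat.card K * (1 + if d = 0 then 1 else 0) := by
  let _ := hK.toField
  have h1 : ∀ a : K, Nat.card {z : K // a * z ^ 3 + b * z ^ 2 + c * z + d = 0}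
      = ∑ z : K, if a * z ^ 3 + b * z ^ 2 + c * z + d = 0 then 1 else 0 := by
    intro a
    rw [Nat.card_eq_fintype_card, Fintype.card_subtype, Finset.card_filter]
  simp only [h1]
  push_cast
  rw [Finset.sum_add_distrib, Finset.sum_comm]
  have h2 : ∀ z : K, (∑ a : K, if a * z ^ 3 + b * z ^ 2 + c * z + d = 0 then (1:ℤ) else 0)
      = 1 + if z = 0 then ((if d = 0 then (Nat.card K : ℤ) else 0) - 1) else 0 := by
    intro z
    by_cases hz : z = 0
    · subst hz
      by_cases hd : d = 0 <;> simp [hd]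
    · obtain ⟨w, hw⟩ := hK.mul_inv_cancel hz
      have : ∀ a : K, (a * z ^ 3 + b * z ^ 2 + c * z + d = 0) ↔
          a = -(b * z ^ 2 + c * z + d) * w ^ 3 := by
        intro a
        have hw3 : z ^ 3 * w ^ 3 = 1 := by rw [← mul_pow, hw, one_pow]
        constructor
        · intro h
          linear_combination w ^ 3 * h - a * hw3
        · rintro rfl
          linear_combination -(b * z ^ 2 + c * z + d) * hw3
      simp only [this, hz]
      simp
  rw [Finset.sum_congr rfl fun z _ => h2 z, Finset.sum_add_distrib]
  simp only [Finset.sum_ite_eq', Finset.mem_univ, if_true, Finset.sum_const, Finset.card_univ,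
    Nat.card_eq_fintype_card, nsmul_eq_mul]
  split_ifs <;> ring

lemma res_isField (P : P1Pt Fq) : IsField (P1Pt.Res P) := by
  match P with
  | none => exact Field.toIsField Fq
  | some p =>
    have : Fact (Irreducible p.1) := ⟨p.2.2⟩
    exact Field.toIsField (AdjoinRoot p.1)

lemma res_finite_card [Fintype Fq] (P : P1Pt Fq) : Finite (P1Pt.Res P) ∧
    Nat.card (P1Pt.Res P) = Fintype.card Fq ^ P1Pt.deg P := by
  match P with
  | none =>
    refine ⟨inferInstanceAs (Finite Fq), ?_⟩
    change Nat.card Fq = _ ^ 1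
    simp
  | some p =>
    have e := (AdjoinRoot.powerBasis p.2.2.ne_zero).basis.equivFun
    rw [AdjoinRoot.powerBasis_dim] at e
    refine ⟨Finite.of_equiv _ e.symm.toEquiv, ?_⟩
    change Nat.card (AdjoinRoot p.1) = _ ^ p.1.natDegree
    rw [Nat.card_congr e.toEquiv]
    simp

instance [Fintype Fq] (P : P1Pt Fq) : Finite (P1Pt.Res P) := (res_finite_card P).1

open Polynomial in
/-- evaluation of the homogenization -/
def evn (n : ℕ) (P : P1Pt Fq) : degreeLT Fq (n + 1) →ₗ[Fq] P1Pt.Res P :=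
  (MvPolynomial.aeval (P1Pt.coords P)).toLinearMap ∘ₗ homogenizeLM n ∘ₗ (degreeLT Fq (n + 1)).subtype

lemma evn_apply (n : ℕ) (P : P1Pt Fq) (f : Polynomial.degreeLT Fq (n + 1)) :
    evn n P f = resEval P (Polynomial.homogenize f.1 n) := rfl

open Polynomial in
lemma natDegree_le_of_mem {n : ℕ} (f : degreeLT Fq (n + 1)) : f.1.natDegree ≤ n := by
  obtain ⟨f, h⟩ := f
  rw [degreeLT_succ_eq_degreeLE, mem_degreeLE] at h
  exact natDegree_le_of_degree_le h

open Polynomial in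
lemma evn_some (n : ℕ) (p) (f : degreeLT Fq (n + 1)) :
    evn n (some p) f = 0 ↔ p.1 ∣ f.1 := by
  rw [← AdjoinRoot.mk_eq_zero, ← AdjoinRoot.aeval_eq]
  have : evn n (some p) f = aeval (AdjoinRoot.root p.1) f.1 :=
    aeval_homogenize_of_eq_one (natDegree_le_of_mem f)
      (A := AdjoinRoot p.1) ![AdjoinRoot.root p.1, 1] rfl
  rw [this]
  rfl

open Polynomial in
lemma evn_none (n : ℕ) (f : degreeLT Fq (n + 1)) :
    evn n none f = 0 ↔ f.1.coeff n = 0 := by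
  have : evn n none f = f.1.coeff n := by
    change MvPolynomial.aeval (![1, 0] : Fin 2 → Fq) (homogenize f.1 n) = _
    rw [homogenize, map_sum, Finset.sum_eq_single (n, 0)]
    · simp [MvPolynomial.aeval_monomial, Finsupp.update_eq_add_single, Finsupp.prod_fintype]
    · rintro ⟨a, b⟩ hab hne
      have : b ≠ 0 := by
        rintro rfl
        simp at hab
        simp [hab] at hne
      simp [MvPolynomial.aeval_monomial, Finsupp.update_eq_add_single, Finsupp.prod_fintype, this]
    · simp
  rw [this]
  rfl

lemma degD_eq (D : Finset (P1Pt Fq)) :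
    degD D = (if none ∈ D then 1 else 0) + ∑ p ∈ D.eraseNone, p.1.natDegree := by
  induction D using Finset.induction_on with
  | empty => simp [degD]
  | insert P D hP ih =>
    rw [degD, Finset.sum_insert hP, ← degD, ih]
    cases P with
    | none =>
      have h1 : (insert none D).eraseNone = D.eraseNone := by
        ext x; simp
      rw [h1]
      simp [hP, P1Pt.deg]
    | some p =>
      have h1 : (insert (some p) D).eraseNone = insert p D.eraseNone := by
        ext x; simp
      have h2 : p ∉ D.eraseNone := by simpa using hP
      rw [h1, Finset.sum_insert h2]
      simp only [Finset.mem_insert, P1Pt.deg, reduceCtorEq, false_or]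
      omega

open Polynomial in
lemma ker_iff (n : ℕ) (D : Finset (P1Pt Fq)) (f : degreeLT Fq (n + 1)) :
    (∀ P ∈ D, evn n P f = 0) ↔ (∏ p ∈ D.eraseNone, p.1) ∣ f.1 ∧
      f.1 ∈ degreeLT Fq (n + 1 - if none ∈ D then 1 else 0) := by
  have h1 : (∀ P ∈ D, evn n P f = 0) ↔
      (∀ p ∈ D.eraseNone, p.1 ∣ f.1) ∧ (none ∈ D → f.1.coeff n = 0) := by
    constructor
    · intro h
      refine ⟨fun p hp => (evn_some n p f).1 (h _ (by simpa using hp)),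
        fun hn => (evn_none n f).1 (h _ hn)⟩
    · rintro ⟨ha, hb⟩ P hP
      cases P with
      | none => exact (evn_none n f).2 (hb hP)
      | some p => exact (evn_some n p f).2 (ha p (by simpa using hP))
  rw [h1]
  refine and_congr ⟨fun h => ?_, fun h p hp => (Finset.dvd_prod_of_mem _ hp).trans h⟩ ?_
  · refine Finset.prod_dvd_of_coprime ?_ h
    intro p _ r _ hpr
    refine (p.2.2.coprime_iff_not_dvd).2 fun hd => hpr ?_
    exact Subtype.ext (eq_of_monic_of_associated p.2.1 r.2.1
      ((p.2.2.dvd_irreducible_iff_associated r.2.2).1 hd))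
  · by_cases hn : none ∈ D
    · simp only [hn, if_true, forall_const, Nat.add_sub_cancel]
      have h := f.2
      rw [mem_degreeLT, degree_lt_iff_coeff_zero] at h ⊢
      constructor
      · intro h0 m hm
        rcases hm.eq_or_lt with rfl | hm
        · exact h0
        · exact h m hm
      · intro h0
        exact h0 n le_rfl
    · simp only [hn, if_false, false_imp_iff, true_iff, Nat.sub_zero]
      exact f.2

open Polynomial in
lemma card_ker [Fintype Fq] (n : ℕ) (D : Finset (P1Pt Fq)) :
    Nat.card {f : degreeLT Fq (n + 1) // ∀ P ∈ D, evn n P f = 0} =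
      Fintype.card Fq ^ (n + 1 - degD D) := by
  rw [← card_degreeLT, degD_eq]
  set δ := if none ∈ D then 1 else 0 with hδ
  have hM : (∏ p ∈ D.eraseNone, p.1).Monic := monic_prod_of_monic _ _ fun p _ => p.2.1
  have hd : (∏ p ∈ D.eraseNone, p.1).natDegree = ∑ p ∈ D.eraseNone, p.1.natDegree :=
    natDegree_prod_of_monic _ _ fun p _ => p.2.1
  rw [← hd]
  simp only [ker_iff]
  rw [← hδ]
  generalize (∏ p ∈ D.eraseNone, p.1) = M at *
  have key : ∀ g : Fq[X], M * g ∈ degreeLT Fq (n + 1 - δ) ↔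
      g ∈ degreeLT Fq (n + 1 - (δ + M.natDegree)) := by
    intro g
    by_cases hg : g = 0
    · simp [hg]
    · rw [mem_degreeLT, mem_degreeLT, ← natDegree_lt_iff_degree_lt hg,
        ← natDegree_lt_iff_degree_lt (mul_ne_zero hM.ne_zero hg),
        natDegree_mul hM.ne_zero hg]
      omega
  symm
  refine Nat.card_congr (Equiv.ofBijective (fun g => ⟨⟨M * g.1, ?_⟩, dvd_mul_right _ _, ?_⟩) ⟨?_, ?_⟩)
  · exact degreeLT_mono (Nat.sub_le _ _) ((key g.1).2 g.2)
  · exact (key g.1).2 g.2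
  · intro g g' h
    have : M * g.1 = M * g'.1 := congrArg (fun x => x.1.1) h
    exact Subtype.ext (mul_left_cancel₀ hM.ne_zero this)
  · rintro ⟨⟨f, hf⟩, ⟨g, hg⟩, h⟩
    have hg' : f = M * g := hg
    subst hg'
    exact ⟨⟨g, (key g).1 h⟩, rfl⟩

instance [Finite Fq] (n : ℕ) : Fintype (Polynomial.degreeLT Fq n) :=
  @Fintype.ofFinite _ (finite_degreeLT Fq n)

instance [Fintype Fq] (P : P1Pt Fq) : Fintype (P1Pt.Res P) := Fintype.ofFinite _

lemma sum_eval [Fintype Fq] (n : ℕ) (D : Finset (P1Pt Fq)) (h : degD D ≤ n + 1)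
    (F : (P : P1Pt Fq) → P1Pt.Res P → ℤ) :
    ∑ f : Polynomial.degreeLT Fq (n + 1), ∏ P ∈ D, F P (evn n P f) =
      (Fintype.card Fq : ℤ) ^ (n + 1 - degD D) * ∏ P ∈ D, ∑ x, F P x := by
  let φ : Polynomial.degreeLT Fq (n + 1) →ₗ[Fq] ((P : D) → P1Pt.Res P.1) :=
    LinearMap.pi fun P => evn n P.1
  have hk : Nat.card φ.toAddMonoidHom.ker = Fintype.card Fq ^ (n + 1 - degD D) := by
    rw [← card_ker]
    refine Nat.card_congr (Equiv.subtypeEquivRight fun f => ?_)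
    rw [AddMonoidHom.mem_ker]
    constructor
    · intro h P hP
      exact congrFun h ⟨P, hP⟩
    · intro h
      funext P
      exact h P.1 P.2
  have hW : Nat.card ((P : D) → P1Pt.Res P.1) = Fintype.card Fq ^ degD D := by
    rw [Nat.card_pi, degD, Finset.prod_coe_sort D (fun P => Nat.card (P1Pt.Res P)),
      ← Finset.prod_pow_eq_pow_sum]
    exact Finset.prod_congr rfl fun P _ => (res_finite_card P).2
  have := sum_comp_hom φ.toAddMonoidHom (by
    rw [hk, hW, ← pow_add, Nat.sub_add_cancel h, card_degreeLT]) (fun w => ∏ P, F P.1 (w P))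
  rw [hk] at this
  rw [← Finset.prod_coe_sort D, Finset.prod_univ_sum, Fintype.piFinset_univ]
  rw [Nat.cast_pow] at this
  rw [← this]
  refine Finset.sum_congr rfl fun f _ => ?_
  rw [← Finset.prod_coe_sort D]
  rfl

lemma count_ne_zero [Fintype Fq] (n : ℕ) (D : Finset (P1Pt Fq)) :
    (∑ f : Polynomial.degreeLT Fq (n + 1), if f ≠ 0 then
      (if ∀ P ∈ D, evn n P f = 0 then (1 : ℤ) else 0) else 0) =
      (Fintype.card Fq : ℤ) ^ (n + 1 - degD D) - 1 := by
  have h := card_ker n D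
  rw [Nat.card_eq_fintype_card, Fintype.card_subtype, Finset.card_filter] at h
  have h' : ((∑ f : Polynomial.degreeLT Fq (n + 1),
      if ∀ P ∈ D, evn n P f = 0 then 1 else 0 : ℕ) : ℤ) = ((_ : ℕ) : ℤ) := congrArg _ h
  push_cast at h'
  rw [← h', eq_sub_iff_add_eq]
  have h0 : (1 : ℤ) = ∑ f : Polynomial.degreeLT Fq (n + 1), if f = 0 then 1 else 0 := by simp
  refine (congrArg (_ + ·) h0).trans ?_
  rw [← Finset.sum_add_distrib]
  refine Finset.sum_congr rfl fun f _ => ?_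
  by_cases hf : f = 0
  · subst hf; simp
  · simp [hf]

open Polynomial in
/-- parametrization of sections -/
def par (ℓ k : ℕ) (t : degreeLT Fq (ℓ + 1) × degreeLT Fq (ℓ - k + 1) × degreeLT Fq (ℓ - 2 * k + 1) ×
    degreeLT Fq (ℓ - 3 * k + 1)) : Fin 4 → MvPolynomial (Fin 2) Fq :=
  ![homogenize t.1.1 ℓ, homogenize t.2.1.1 (ℓ - k), homogenize t.2.2.1.1 (ℓ - 2 * k),
    homogenize t.2.2.2.1 (ℓ - 3 * k)]

open Polynomial in
lemma hom_inj (n : ℕ) (f g : degreeLT Fq (n + 1)) (h : homogenize f.1 n = homogenize g.1 n) :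
    f = g := by
  rw [← sub_eq_zero, ← homogenize_sub] at h
  have := eq_zero_of_homogenize_eq_zero (natDegree_le_of_mem (f - g)) h
  rw [← sub_eq_zero]
  exact Subtype.ext this

open Polynomial in
lemma hom_surj (n : ℕ) (d : ℤ) (hd : d = n) (A : MvPolynomial (Fin 2) Fq) (hA : IsHomOfDeg A d) :
    ∃ f : degreeLT Fq (n + 1), homogenize f.1 n = A := by
  subst hd
  have hA1 : A.IsHomogeneous n := by simpa using hA.1
  refine ⟨⟨MvPolynomial.aeval ![X, 1] A, ?_⟩, homogenize_eq_of_isHomogeneous hA1 rfl⟩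
  rw [A.as_sum, map_sum]
  refine Submodule.sum_mem _ fun m hm => ?_
  have hw : m 0 + m 1 = n := by
    have := hA1 (MvPolynomial.mem_support_iff.1 hm)
    simpa [Finsupp.weight_apply, Finsupp.sum_fintype] using this
  rw [MvPolynomial.aeval_monomial, Finsupp.prod_fintype _ _ (by simp)]
  simp only [Fin.prod_univ_two, Matrix.cons_val_zero, Matrix.cons_val_one, one_pow, mul_one]
  rw [mem_degreeLT, ← C_eq_algebraMap]
  refine (degree_C_mul_X_pow_le _ _).trans_lt ?_
  exact_mod_cast (by omega : m 0 < n + 1)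

lemma isHom (n : ℕ) (d : ℤ) (hd : d = n) (f : Polynomial Fq) :
    IsHomOfDeg (f.homogenize n) d := by
  subst hd
  refine ⟨by simp, fun h => absurd h (by simp)⟩

lemma par_inj (ℓ k : ℕ) : Function.Injective (par (Fq := Fq) ℓ k) := by
  rintro ⟨a, b, c, d⟩ ⟨a', b', c', d'⟩ h
  have h0 := hom_inj _ a a' (congrFun h 0)
  have h1 := hom_inj _ b b' (congrFun h 1)
  have h2 := hom_inj _ c c' (congrFun h 2)
  have h3 := hom_inj _ d d' (congrFun h 3)
  rw [h0, h1, h2, h3]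

lemma par_image (ℓ k : ℕ) (h : 3 * k ≤ ℓ) :
    {s ∈ SecSet (Fq := Fq) 3 ℓ k | s 3 ≠ 0} = par ℓ k '' {t | t.2.2.2 ≠ 0} := by
  ext s
  constructor
  · rintro ⟨hs, h3⟩
    obtain ⟨a, ha⟩ := hom_surj ℓ _ (by simp) _ (hs 0)
    obtain ⟨b, hb⟩ := hom_surj (ℓ - k) _ (by simp; omega) _ (hs 1)
    obtain ⟨c, hc⟩ := hom_surj (ℓ - 2 * k) _ (by simp; omega) _ (hs 2)
    obtain ⟨d, hd⟩ := hom_surj (ℓ - 3 * k) _ (by simp; omega) _ (hs 3)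
    refine ⟨(a, b, c, d), ?_, ?_⟩
    · rintro (rfl : d = 0)
      apply h3
      rw [← hd]
      simp
    · funext i
      fin_cases i
      · exact ha
      · exact hb
      · exact hc
      · exact hd
  · rintro ⟨⟨a, b, c, d⟩, h3, rfl⟩
    refine ⟨fun i => ?_, fun h0 => h3 (hom_inj _ d 0 ?_)⟩
    · fin_cases i
      · exact isHom ℓ _ (by simp) _
      · exact isHom (ℓ - k) _ (by simp; omega) _
      · exact isHom (ℓ - 2 * k) _ (by simp; omega) _
      · exact isHom (ℓ - 3 * k) _ (by simp; omega) _
    · exact h0.trans (by simp)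

lemma main_sum [Fintype Fq] (ℓ k : ℕ) (D : Finset (P1Pt Fq)) (h1 : 3 * k ≤ ℓ)
    (h2 : degD D ≤ ℓ) (e : ℤ) :
    (∑ᶠ s ∈ {s ∈ SecSet 3 ℓ k | s 3 ≠ 0}, ∏ P ∈ D, ((rP P s : ℤ) - e)) =
      (Fintype.card Fq : ℤ) ^ (3 * ℓ + 3 - 3 * k) *
        ∑ d : Polynomial.degreeLT Fq (ℓ - 3 * k + 1), if d ≠ 0 then
          ∏ P ∈ D, (1 - e + if evn (ℓ - 3 * k) P d = 0 then 1 else 0) else 0 := by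
  rw [par_image ℓ k h1, finsum_mem_image (par_inj ℓ k).injOn]
  have : {t : Polynomial.degreeLT Fq (ℓ + 1) × Polynomial.degreeLT Fq (ℓ - k + 1) ×
    Polynomial.degreeLT Fq (ℓ - 2 * k + 1) × Polynomial.degreeLT Fq (ℓ - 3 * k + 1) | t.2.2.2 ≠ 0} =
      ((Finset.univ.filter fun t : Polynomial.degreeLT Fq (ℓ + 1) ×
        Polynomial.degreeLT Fq (ℓ - k + 1) × Polynomial.degreeLT Fq (ℓ - 2 * k + 1) ×
        Polynomial.degreeLT Fq (ℓ - 3 * k + 1) => t.2.2.2 ≠ 0 : Finset _) : Set _) := by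
    ext; simp
  rw [this, finsum_mem_coe_finset, Finset.sum_filter, Fintype.sum_prod_type, Finset.sum_comm]
  have key : ∀ y : Polynomial.degreeLT Fq (ℓ - k + 1) ×
      Polynomial.degreeLT Fq (ℓ - 2 * k + 1) × Polynomial.degreeLT Fq (ℓ - 3 * k + 1),
      (∑ x : Polynomial.degreeLT Fq (ℓ + 1), if y.2.2 ≠ 0 then
        ∏ P ∈ D, ((rP P (par ℓ k (x, y)) : ℤ) - e) else 0) =
      (Fintype.card Fq : ℤ) ^ (ℓ + 1) * if y.2.2 ≠ 0 then
          ∏ P ∈ D, (1 - e + if evn (ℓ - 3 * k) P y.2.2 = 0 then 1 else 0) else 0 := by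
    rintro ⟨b, c, d⟩
    by_cases hd : d = 0
    · simp [hd]
    simp only [ne_eq, hd, not_false_eq_true, if_true]
    have := sum_eval ℓ D (by omega) (fun P a =>
      (((Nat.card {z : P1Pt.Res P // a * z ^ 3 + evn (ℓ - k) P b * z ^ 2 +
        evn (ℓ - 2 * k) P c * z + evn (ℓ - 3 * k) P d = 0} +
      (if a = 0 then 1 else 0) : ℕ) : ℤ)) - e)
    refine Eq.trans ?_ (this.trans ?_)
    · rfl
    · have h3 : (Fintype.card Fq : ℤ) ^ (ℓ + 1) =
          (Fintype.card Fq : ℤ) ^ (ℓ + 1 - degD D) *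
            ∏ P ∈ D, (Fintype.card Fq : ℤ) ^ P1Pt.deg P := by
        rw [Finset.prod_pow_eq_pow_sum, ← degD, ← pow_add, Nat.sub_add_cancel (by omega)]
      rw [h3, mul_assoc, ← Finset.prod_mul_distrib]
      congr 1
      refine Finset.prod_congr rfl fun P _ => ?_
      rw [Finset.sum_sub_distrib, cubic_sum (res_isField P), Finset.sum_const, Finset.card_univ,
        ← Nat.card_eq_fintype_card, (res_finite_card P).2, nsmul_eq_mul]
      push_cast
      ring
  refine (Finset.sum_congr rfl fun y _ => key y).trans ?_
  rw [← Finset.mul_sum]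
  have fin : ∀ G : Polynomial.degreeLT Fq (ℓ - 3 * k + 1) → ℤ,
      (Fintype.card Fq : ℤ) ^ (ℓ + 1) * ∑ y : Polynomial.degreeLT Fq (ℓ - k + 1) ×
        Polynomial.degreeLT Fq (ℓ - 2 * k + 1) × Polynomial.degreeLT Fq (ℓ - 3 * k + 1), G y.2.2 =
      (Fintype.card Fq : ℤ) ^ (3 * ℓ + 3 - 3 * k) * ∑ d, G d := by
    intro G
    simp only [Fintype.sum_prod_type, Finset.sum_const, Finset.card_univ, nsmul_eq_mul]
    have hc : ∀ m, Fintype.card (Polynomial.degreeLT Fq m) = Fintype.card Fq ^ m := fun m => by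
      rw [← card_degreeLT, Nat.card_eq_fintype_card]
    rw [hc, hc,
      ← mul_assoc, ← mul_assoc]
    push_cast
    rw [← pow_add, ← pow_add]
    congr 2
    omega
  exact fin fun d => if d ≠ 0 then
          ∏ P ∈ D, (1 - e + if evn (ℓ - 3 * k) P d = 0 then 1 else 0) else 0

lemma final_arith (q : ℤ) (ℓ k m : ℕ) (h1 : 3 * k ≤ ℓ) :
    q ^ (3 * ℓ + 3 - 3 * k) * (q ^ (ℓ - 3 * k + 1 - m) - 1) =
      if 3 * k + m ≤ ℓ then q ^ (4 * ℓ + 4 - 6 * k - m) - q ^ (3 * ℓ + 3 - 3 * k) else 0 := by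
  split_ifs with h
  · rw [mul_sub, mul_one, ← pow_add]
    congr 2
    omega
  · rw [show ℓ - 3 * k + 1 - m = 0 by omega]
    simp

/-- Let `ℓ, k ≥ 0` and `D` a reduced effective divisor on `P¹`
with `ℓ ≥ 3k` and `ℓ ≥ deg D`.  Then
`R^{xir}(ℓ,k,D) = Σ_{D₀ ⊆ D} [q^{4ℓ−6k+4−deg D₀} − q^{3ℓ−3k+3}` if `ℓ−3k ≥ deg D₀`,
else `0]`, and consequently
`Φ^{xir}(ℓ,k,D) = q^{4ℓ−6k+4−deg D} − q^{3ℓ−3k+3}` if `ℓ−3k ≥ deg D` and `0` otherwise. -/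
theorem statement_16 (Fq : Type) [Field Fq] [Fintype Fq] (ℓ k : ℕ)
    (D : Finset (P1Pt Fq)) (h1 : 3 * k ≤ ℓ) (h2 : degD D ≤ ℓ) :
    (((∑ᶠ s ∈ {s ∈ SecSet 3 ℓ k | s 3 ≠ 0}, rD D s) : ℤ) =
      ∑ D₀ ∈ D.powerset,
        (if 3 * k + degD D₀ ≤ ℓ then
          (Fintype.card Fq : ℤ) ^ (4 * ℓ + 4 - 6 * k - degD D₀) -
            (Fintype.card Fq : ℤ) ^ (3 * ℓ + 3 - 3 * k)
        else 0)) ∧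
    ((∑ᶠ s ∈ {s ∈ SecSet 3 ℓ k | s 3 ≠ 0}, aD D s) =
      (if 3 * k + degD D ≤ ℓ then
        (Fintype.card Fq : ℤ) ^ (4 * ℓ + 4 - 6 * k - degD D) -
          (Fintype.card Fq : ℤ) ^ (3 * ℓ + 3 - 3 * k)
      else 0)) := by
  constructor
  · have h := main_sum ℓ k D h1 h2 0
    simp only [sub_zero] at h
    simp only [rD, Nat.cast_prod]
    rw [h]
    simp only [Finset.prod_one_add, Finset.prod_ite_zero, Finset.prod_const_one]
    have h3 : ∀ d : Polynomial.degreeLT Fq (ℓ - 3 * k + 1),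
        (if d ≠ 0 then ∑ t ∈ D.powerset,
          (if ∀ P ∈ t, evn (ℓ - 3 * k) P d = 0 then (1 : ℤ) else 0) else 0) =
        ∑ t ∈ D.powerset, (if d ≠ 0 then
          (if ∀ P ∈ t, evn (ℓ - 3 * k) P d = 0 then (1 : ℤ) else 0) else 0) := by
      intro d
      by_cases hd : d = 0 <;> simp [hd]
    rw [Finset.sum_congr rfl fun d _ => h3 d, Finset.sum_comm, Finset.mul_sum]
    refine Finset.sum_congr rfl fun t _ => ?_
    rw [count_ne_zero, final_arith _ _ _ _ h1]
  · have h := main_sum ℓ k D h1 h2 1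
    simp only [aD]
    rw [h]
    simp only [sub_self, zero_add, Finset.prod_ite_zero, Finset.prod_const_one]
    rw [count_ne_zero, final_arith _ _ _ _ h1]

end Stmt16
end
end
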